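/- arXiv:0704.1564 — 8 statements merged into one kernel-verified Lean document; each statement's English description precedes it below -/
import Mathlib

section
/- Entropic uncertainty principle, exact version: let H be a complex Hilbert space, (π_k)_{k=1}^N and (τ_j)_{j=1}^M two partitions of unity of bounded operators on H, v = (v_k)_{k=1}^N and w = (w_j)_{j=1}^M families of positive real numbers, and U a linear isometry of H. Set c = max_{j,k} w_j · v_k · ‖τ_j U π_k*‖ (operator norm). Then every unit vector ψ ∈ H satisfies p_{τ,w}(Uψ) + p_{π,v}(ψ) ≥ −2 · log c. -/
open Finset

/-- `η(s) = -s log s`. -/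
noncomputable def eta (s : ℝ) : ℝ := -s * Real.log s

/-- Pressure of a unit vector with respect to a quantum partition of unity `π`
and weights `v`. -/
noncomputable def pressure {H : Type*} [NormedAddCommGroup H] [InnerProductSpace ℂ H]
    {N : ℕ} (π : Fin N → H →L[ℂ] H) (v : Fin N → ℝ) (ψ : H) : ℝ :=
  (∑ k, eta (‖π k ψ‖ ^ 2)) - ∑ k, ‖π k ψ‖ ^ 2 * Real.log (v k ^ 2)


open ContinuousLinearMap in
lemma part_sq {H : Type*} [NormedAddCommGroup H] [InnerProductSpace ℂ H] [CompleteSpace H]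
    {N : ℕ} (π : Fin N → H →L[ℂ] H)
    (hπ : ∑ k, ContinuousLinearMap.adjoint (π k) ∘L π k = (1 : H →L[ℂ] H)) (x : H) :
    ∑ k, ‖π k x‖ ^ 2 = ‖x‖ ^ 2 := by
  have h := congrArg (fun A : H →L[ℂ] H => (inner ℂ x (A x) : ℂ)) hπ
  simp only [ContinuousLinearMap.sum_apply, inner_sum, ContinuousLinearMap.comp_apply,
    ContinuousLinearMap.adjoint_inner_right, ContinuousLinearMap.one_apply,
    inner_self_eq_norm_sq_to_K] at h
  exact_mod_cast h

lemma part_cs {H : Type*} [NormedAddCommGroup H] [InnerProductSpace ℂ H] [CompleteSpace H]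
    {N : ℕ} (π : Fin N → H →L[ℂ] H)
    (hπ : ∑ k, ContinuousLinearMap.adjoint (π k) ∘L π k = (1 : H →L[ℂ] H)) (x y : H) :
    ∑ k, ‖π k x‖ * ‖π k y‖ ≤ ‖x‖ * ‖y‖ := by
  have h := Finset.sum_mul_sq_le_sq_mul_sq Finset.univ (fun k => ‖π k x‖) (fun k => ‖π k y‖)
  rw [part_sq π hπ, part_sq π hπ, ← mul_pow] at h
  exact le_of_sq_le_sq h (by positivity)

lemma part_inner {H : Type*} [NormedAddCommGroup H] [InnerProductSpace ℂ H] [CompleteSpace H]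
    {N : ℕ} (π : Fin N → H →L[ℂ] H)
    (hπ : ∑ k, ContinuousLinearMap.adjoint (π k) ∘L π k = (1 : H →L[ℂ] H)) (x y : H) :
    ∑ k, (inner ℂ (π k x) (π k y) : ℂ) = inner ℂ x y := by
  have h := congrArg (fun A : H →L[ℂ] H => (inner ℂ x (A y) : ℂ)) hπ
  simpa only [ContinuousLinearMap.sum_apply, inner_sum, ContinuousLinearMap.comp_apply,
    ContinuousLinearMap.adjoint_inner_right, ContinuousLinearMap.one_apply] using h

lemma part_X {H : Type*} [NormedAddCommGroup H] [InnerProductSpace ℂ H] [CompleteSpace H]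
    {N : ℕ} (π : Fin N → H →L[ℂ] H)
    (hπ : ∑ k, ContinuousLinearMap.adjoint (π k) ∘L π k = (1 : H →L[ℂ] H)) (ψ : H)
    (hψ : ‖ψ‖ = 1) (e : Fin N → ℂ) (he : ∀ k, ‖e k‖ = 1) :
    ‖∑ k, e k • ContinuousLinearMap.adjoint (π k) (π k ψ)‖ ≤ 1 := by
  set X := ∑ k, e k • ContinuousLinearMap.adjoint (π k) (π k ψ) with hX
  have h1 : ‖(inner ℂ X X : ℂ)‖ ≤ ‖X‖ * ‖ψ‖ := by
    conv_lhs => rw [hX, inner_sum, ← hX]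
    refine le_trans (norm_sum_le _ _) (le_trans (Finset.sum_le_sum fun k _ => ?_)
      (part_cs π hπ X ψ))
    rw [inner_smul_right, norm_mul, he, one_mul, ContinuousLinearMap.adjoint_inner_right]
    exact norm_inner_le_norm _ _
  rw [inner_self_eq_norm_sq_to_K, hψ] at h1
  simp at h1
  by_contra! h
  nlinarith

lemma deriv_cmp {g : ℝ → ℝ} {g' c : ℝ} (hc : 0 < c) (hg : HasDerivAt g g' 0) (h0 : g 0 = 1)
    (hle : ∀ t ∈ Set.Ioo (0:ℝ) 1, g t ≤ c ^ t) : g' ≤ Real.log c := by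
  have h1 : HasDerivAt (fun t : ℝ => c ^ t) (Real.log c) 0 := by
    simpa using (Real.hasStrictDerivAt_const_rpow hc 0).hasDerivAt
  have h2 := (h1.sub hg).hasDerivWithinAt (s := Set.Ioi 0)
  rw [hasDerivWithinAt_iff_tendsto_slope' (by simp)] at h2
  have : 0 ≤ Real.log c - g' := by
    refine ge_of_tendsto h2 ?_
    filter_upwards [Ioo_mem_nhdsGT (zero_lt_one' ℝ)] with t ht
    have := hle t ht
    simp only [slope, Pi.sub_apply, h0, Real.rpow_zero, sub_self, vsub_eq_sub, sub_zero,
      smul_eq_mul]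
    have := ht.1
    exact mul_nonneg (by positivity) (by linarith)
  linarith

lemma exp_bound {x v : ℝ} (hx : 0 ≤ x) (hv : 0 < v) :
    Real.exp (Real.log x + Real.log v) * x = v * x ^ 2 := by
  rcases hx.eq_or_lt with rfl | h
  · simp
  · rw [Real.exp_add, Real.exp_log h, Real.exp_log hv]; ring

/-- Entropic uncertainty principle, exact version. -/
theorem entropic_uncertainty_exact
    {H : Type*} [NormedAddCommGroup H] [InnerProductSpace ℂ H] [CompleteSpace H]
    {N M : ℕ} [NeZero N] [NeZero M]
    (π : Fin N → H →L[ℂ] H) (τ : Fin M → H →L[ℂ] H)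
    (hπ : ∑ k, ContinuousLinearMap.adjoint (π k) ∘L π k = (1 : H →L[ℂ] H))
    (hτ : ∑ j, ContinuousLinearMap.adjoint (τ j) ∘L τ j = (1 : H →L[ℂ] H))
    (v : Fin N → ℝ) (w : Fin M → ℝ) (hv : ∀ k, 0 < v k) (hw : ∀ j, 0 < w j)
    (U : H →L[ℂ] H) (hU : ∀ x, ‖U x‖ = ‖x‖)
    (c : ℝ)
    (hc : c = Finset.univ.sup' Finset.univ_nonempty fun jk : Fin M × Fin N =>
        w jk.1 * v jk.2 * ‖τ jk.1 ∘L U ∘L ContinuousLinearMap.adjoint (π jk.2)‖)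
    (ψ : H) (hψ : ‖ψ‖ = 1) :
    pressure τ w (U ψ) + pressure π v ψ ≥ -2 * Real.log c := by
  have hUin : ∀ x y : H, (inner ℂ (U x) (U y) : ℂ) = inner ℂ x y :=
    (LinearMap.norm_map_iff_inner_map_map U).1 hU
  have hUψ : ‖U ψ‖ = 1 := by rw [hU, hψ]
  set T : Fin M → Fin N → H →L[ℂ] H :=
    fun j k => τ j ∘L U ∘L ContinuousLinearMap.adjoint (π k) with hT
  have hcb : ∀ j k, w j * v k * ‖T j k‖ ≤ c := by
    intro j k
    rw [hc]
    exact Finset.le_sup' (fun jk : Fin M × Fin N =>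
        w jk.1 * v jk.2 * ‖τ jk.1 ∘L U ∘L ContinuousLinearMap.adjoint (π jk.2)‖)
        (Finset.mem_univ (j, k))
  set α : Fin N → ℝ := fun k => Real.log ‖π k ψ‖ + Real.log (v k) with hα
  set β : Fin M → ℝ := fun j => Real.log ‖τ j (U ψ)‖ + Real.log (w j) with hβ
  set r : Fin M → Fin N → ℂ := fun j k => inner ℂ (τ j (U ψ)) (T j k (π k ψ)) with hr
  have hsumk : ∑ k, ContinuousLinearMap.adjoint (π k) (π k ψ) = ψ := by
    have := congrArg (fun A : H →L[ℂ] H => A ψ) hπ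
    simpa using this
  have hrk : ∀ j, ∑ k, r j k = (‖τ j (U ψ)‖ ^ 2 : ℝ) := by
    intro j
    simp only [hr, hT, ContinuousLinearMap.comp_apply]
    rw [← inner_sum, ← map_sum, ← map_sum, hsumk, inner_self_eq_norm_sq_to_K]
    simp
  have hrj : ∀ k, ∑ j, r j k = (‖π k ψ‖ ^ 2 : ℝ) := by
    intro k
    simp only [hr, hT, ContinuousLinearMap.comp_apply]
    rw [part_inner τ hτ, hUin, ContinuousLinearMap.adjoint_inner_right,
      inner_self_eq_norm_sq_to_K]
    simp
  have hp : ∑ k, ‖π k ψ‖ ^ 2 = 1 := by rw [part_sq π hπ, hψ]; norm_num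
  have hq : ∑ j, ‖τ j (U ψ)‖ ^ 2 = 1 := by rw [part_sq τ hτ, hUψ]; norm_num
  have hc0 : 0 < c := by
    by_contra! hcn
    have hT0 : ∀ j k, T j k = 0 := by
      intro j k
      have h1 := hcb j k
      have h2 : 0 < w j * v k := mul_pos (hw j) (hv k)
      have h3 := norm_nonneg (T j k)
      rw [← norm_eq_zero]
      nlinarith
    have : ∀ j, ‖τ j (U ψ)‖ ^ 2 = 0 := by
      intro j
      have h := hrk j
      simp only [hr, hT0, ContinuousLinearMap.zero_apply, inner_zero_right,
        Finset.sum_const_zero] at h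
      exact_mod_cast h.symm
    simp [this] at hq
  set f : ℂ → ℂ := fun z => ∑ j, ∑ k, Complex.exp (z * ((β j + α k : ℝ) : ℂ)) * r j k with hf
  have hnorm : ∀ (z : ℂ) (x : ℝ), ‖Complex.exp (z * (x : ℂ))‖ = Real.exp (z.re * x) := by
    intro z x
    rw [Complex.norm_exp]; simp
  have hd : DiffContOnCl ℂ f (Complex.HadamardThreeLines.verticalStrip 0 1) := by
    apply Differentiable.diffContOnCl
    simp only [hf]
    fun_prop
  have hB : BddAbove ((norm ∘ f) '' Complex.HadamardThreeLines.verticalClosedStrip 0 1) := by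
    refine ⟨∑ j, ∑ k, Real.exp |β j + α k| * ‖r j k‖, ?_⟩
    rintro _ ⟨z, hz, rfl⟩
    have hz' : 0 ≤ z.re ∧ z.re ≤ 1 := hz
    refine (norm_sum_le _ _).trans (Finset.sum_le_sum fun j _ => (norm_sum_le _ _).trans
      (Finset.sum_le_sum fun k _ => ?_))
    rw [norm_mul, hnorm]
    gcongr
    calc z.re * (β j + α k) ≤ z.re * |β j + α k| :=
          mul_le_mul_of_nonneg_left (le_abs_self _) hz'.1
      _ ≤ 1 * |β j + α k| := by gcongr; exact hz'.2
      _ = _ := one_mul _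
  have hE0 : ∀ z ∈ Complex.re ⁻¹' {(0:ℝ)}, ‖f z‖ ≤ 1 := by
    intro z hz
    have hz : z.re = 0 := hz
    set X := ∑ k, Complex.exp (z * (α k : ℂ)) • ContinuousLinearMap.adjoint (π k) (π k ψ) with hX
    have hX1 : ‖X‖ ≤ 1 := part_X π hπ ψ hψ _ (fun k => by rw [hnorm, hz]; simp)
    have hfX : f z = ∑ j, Complex.exp (z * (β j : ℂ)) * inner ℂ (τ j (U ψ)) (τ j (U X)) := by
      simp only [hf, hX, hr, hT, map_sum, map_smul, inner_sum, inner_smul_right, Finset.mul_sum,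
        ContinuousLinearMap.comp_apply]
      refine Finset.sum_congr rfl fun j _ => Finset.sum_congr rfl fun k _ => ?_
      rw [← mul_assoc, ← Complex.exp_add]
      push_cast
      rw [mul_add]
    rw [hfX]
    calc _ ≤ ∑ j, ‖τ j (U ψ)‖ * ‖τ j (U X)‖ := by
          refine (norm_sum_le _ _).trans (Finset.sum_le_sum fun j _ => ?_)
          rw [norm_mul, hnorm, hz, zero_mul, Real.exp_zero, one_mul]
          exact norm_inner_le_norm _ _
      _ ≤ ‖U ψ‖ * ‖U X‖ := part_cs τ hτ _ _
      _ ≤ 1 := by rw [hUψ, hU, one_mul]; exact hX1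
  have hE1 : ∀ z ∈ Complex.re ⁻¹' {(1:ℝ)}, ‖f z‖ ≤ c := by
    intro z hz
    have hz : z.re = 1 := hz
    calc ‖f z‖ ≤ ∑ j, ∑ k, ‖τ j (U ψ)‖ ^ 2 * (‖π k ψ‖ ^ 2 * c) := by
          refine (norm_sum_le _ _).trans (Finset.sum_le_sum fun j _ => (norm_sum_le _ _).trans
            (Finset.sum_le_sum fun k _ => ?_))
          rw [norm_mul, hnorm, hz, one_mul, Real.exp_add]
          have h1 : ‖r j k‖ ≤ ‖τ j (U ψ)‖ * (‖T j k‖ * ‖π k ψ‖) :=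
            (norm_inner_le_norm _ _).trans (by gcongr; exact (T j k).le_opNorm _)
          have h2 := exp_bound (norm_nonneg (π k ψ)) (hv k)
          have h3 := exp_bound (norm_nonneg (τ j (U ψ))) (hw j)
          calc _ ≤ Real.exp (β j) * Real.exp (α k) * (‖τ j (U ψ)‖ * (‖T j k‖ * ‖π k ψ‖)) := by
                gcongr
            _ = (Real.exp (β j) * ‖τ j (U ψ)‖) * (Real.exp (α k) * ‖π k ψ‖) * ‖T j k‖ := by ring
            _ = ‖τ j (U ψ)‖ ^ 2 * (‖π k ψ‖ ^ 2 * (w j * v k * ‖T j k‖)) := by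
                simp only [hα, hβ]
                rw [h2, h3]; ring
            _ ≤ _ := by gcongr; exact hcb j k
      _ = c := by
          simp_rw [← Finset.mul_sum, ← Finset.sum_mul]
          rw [hp, hq]; ring
  have hder := deriv_cmp (g := fun t : ℝ => ∑ j, ∑ k, Real.exp (t * (β j + α k)) * (r j k).re)
    (g' := ∑ j, ∑ k, (β j + α k) * (r j k).re) hc0 ?_ ?_ ?_
  · have hrk' : ∀ j, ∑ k, (r j k).re = ‖τ j (U ψ)‖ ^ 2 := by
      intro j
      rw [← Complex.re_sum, hrk, Complex.ofReal_re]
    have hrj' : ∀ k, ∑ j, (r j k).re = ‖π k ψ‖ ^ 2 := by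
      intro j
      rw [← Complex.re_sum, hrj, Complex.ofReal_re]
    have hsum : ∑ j, ∑ k, (β j + α k) * (r j k).re
        = ∑ j, β j * ‖τ j (U ψ)‖ ^ 2 + ∑ k, α k * ‖π k ψ‖ ^ 2 := by
      simp_rw [add_mul, Finset.sum_add_distrib]
      congr 1
      · simp_rw [← Finset.mul_sum, hrk']
      · rw [Finset.sum_comm]
        simp_rw [← Finset.mul_sum, hrj']
    have e1 : pressure τ w (U ψ) = -2 * ∑ j, β j * ‖τ j (U ψ)‖ ^ 2 := by
      simp only [pressure, eta, hβ, Real.log_pow]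
      rw [← Finset.sum_sub_distrib, Finset.mul_sum]
      refine Finset.sum_congr rfl fun j _ => ?_
      push_cast; ring
    have e2 : pressure π v ψ = -2 * ∑ k, α k * ‖π k ψ‖ ^ 2 := by
      simp only [pressure, eta, hα, Real.log_pow]
      rw [← Finset.sum_sub_distrib, Finset.mul_sum]
      refine Finset.sum_congr rfl fun j _ => ?_
      push_cast; ring
    rw [e1, e2]
    rw [hsum] at hder
    linarith
  · refine HasDerivAt.fun_sum fun j _ => HasDerivAt.fun_sum fun k _ => ?_
    have h := (((hasDerivAt_id (0:ℝ)).mul_const (β j + α k)).exp).mul_const (r j k).re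
    simpa using h
  · simp only [zero_mul, Real.exp_zero, one_mul]
    rw [← hq]
    refine Finset.sum_congr rfl fun j _ => ?_
    rw [← Complex.re_sum, hrk, Complex.ofReal_re]
  · intro t ht
    have h3 := Complex.HadamardThreeLines.norm_le_interp_of_mem_verticalClosedStrip₀₁' f
      (z := (t : ℂ)) (a := 1) (b := c) (by
        change (t : ℂ).re ∈ Set.Icc (0:ℝ) 1
        exact ⟨ht.1.le, ht.2.le⟩) hd hB hE0 hE1
    rw [Real.one_rpow, one_mul, Complex.ofReal_re] at h3
    refine le_trans (le_of_eq ?_) ((Complex.re_le_norm _).trans h3)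
    simp only [hf, Complex.re_sum]
    refine Finset.sum_congr rfl fun j _ => Finset.sum_congr rfl fun k _ => ?_
    rw [← Complex.ofReal_mul, ← Complex.ofReal_exp, Complex.re_ofReal_mul]
end

section
/- Maassen–Uffink entropic uncertainty principle: let (e_k)_{k=1}^N be an orthonormal basis of an N-dimensional complex Hilbert space H and U a unitary operator on H. Define c(U) = max_{j,k} |⟨e_k, U e_j⟩|. Then every unit vector ψ ∈ H satisfies h(Uψ) + h(ψ) ≥ −2 · log c(U), where h(φ) = Σ_{k=1}^N η(|⟨e_k, φ⟩|²). -/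
open Finset
open scoped InnerProductSpace

/-- Shannon entropy of a vector with respect to an orthonormal basis. -/
noncomputable def shannonEntropy {H : Type*} [NormedAddCommGroup H] [InnerProductSpace ℂ H]
    {N : ℕ} (e : OrthonormalBasis (Fin N) ℂ H) (φ : H) : ℝ :=
  ∑ k, eta (‖⟪e k, φ⟫_ℂ‖ ^ 2)

open Complex in
/-- Abstract interpolation step: a finite exponential sum with three-line bounds. -/
lemma mu_deriv_bound {ι : Type*} (s : Finset ι) (w : ι → ℂ) (l : ι → ℝ) (c : ℝ) (hc : 0 < c)
    (h1 : ∑ i ∈ s, w i = 1)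
    (ha : ∀ z : ℂ, z.re = 0 → ‖∑ i ∈ s, w i * exp (z * l i)‖ ≤ 1)
    (hb : ∀ z : ℂ, z.re = 1 → ‖∑ i ∈ s, w i * exp (z * l i)‖ ≤ c) :
    (∑ i ∈ s, w i * l i).re ≤ Real.log c := by
  set F : ℂ → ℂ := fun z => ∑ i ∈ s, w i * exp (z * l i) with hF
  have hdiff : Differentiable ℂ F := by
    intro z; simp only [hF]; fun_prop
  have hbd : BddAbove ((norm ∘ F) '' HadamardThreeLines.verticalClosedStrip 0 1) := by
    refine ⟨∑ i ∈ s, ‖w i‖ * Real.exp |l i|, ?_⟩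
    rintro _ ⟨z, hz, rfl⟩
    simp only [HadamardThreeLines.verticalClosedStrip, Set.mem_preimage, Set.mem_Icc] at hz
    refine (norm_sum_le _ _).trans (Finset.sum_le_sum fun i _ => ?_)
    rw [norm_mul, Complex.norm_exp]
    gcongr
    simp only [mul_re, ofReal_re, ofReal_im, mul_zero, sub_zero]
    calc z.re * l i ≤ |z.re * l i| := le_abs_self _
      _ = z.re * |l i| := by rw [abs_mul, abs_of_nonneg hz.1]
      _ ≤ 1 * |l i| := by gcongr; exact hz.2
      _ = _ := one_mul _
  have key : ∀ t : ℝ, 0 ≤ t → t ≤ 1 → (F t).re ≤ Real.exp (t * Real.log c) := by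
    intro t h0 h1
    have := HadamardThreeLines.norm_le_interp_of_mem_verticalClosedStrip₀₁' F (z := (t:ℂ))
      (a := 1) (b := c) (by
        simp [HadamardThreeLines.verticalClosedStrip, h0, h1])
      hdiff.diffContOnCl hbd (fun z hz => ha z hz) (fun z hz => hb z hz)
    simp only [Real.one_rpow, one_mul, ofReal_re] at this
    rw [mul_comm, ← Real.rpow_def_of_pos hc]
    exact (Complex.re_le_norm _).trans this
  have hd : HasDerivAt F (∑ i ∈ s, w i * l i) 0 := by
    have : ∀ i ∈ s, HasDerivAt (fun z : ℂ => w i * exp (z * l i)) (w i * l i) 0 := by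
      intro i _
      have h := (((hasDerivAt_id (0:ℂ)).mul_const (l i : ℂ)).cexp).const_mul (w i)
      simpa using h
    exact HasDerivAt.fun_sum this
  have hd2 : HasDerivAt (fun t : ℝ => Real.exp (t * Real.log c) - (F t).re)
      (Real.log c - (∑ i ∈ s, w i * l i).re) 0 := by
    have hA : HasDerivAt (fun t : ℝ => Real.exp (t * Real.log c)) (Real.log c) 0 := by
      simpa using ((hasDerivAt_id (0:ℝ)).mul_const (Real.log c)).exp
    have hB : HasDerivAt (fun t : ℝ => (F t).re) (∑ i ∈ s, w i * l i).re 0 := by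
      apply HasDerivAt.real_of_complex
      simpa using hd
    exact hA.sub hB
  have hF0 : F 0 = 1 := by simp [hF, h1]
  have hs := hd2.tendsto_slope_zero_right
  rw [← sub_nonneg]
  refine ge_of_tendsto hs ?_
  filter_upwards [Ioo_mem_nhdsGT (show (0:ℝ) < 1 by norm_num)] with t ht
  have := key t ht.1.le ht.2.le
  simp only [zero_add, zero_mul, Real.exp_zero, ofReal_zero, hF0, one_re, sub_self, sub_zero,
    smul_eq_mul]
  exact mul_nonneg (inv_nonneg.2 ht.1.le) (by linarith)

open Complex ComplexConjugate in
/-- Maassen–Uffink entropic uncertainty principle. -/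
theorem maassen_uffink
    {H : Type*} [NormedAddCommGroup H] [InnerProductSpace ℂ H] [CompleteSpace H]
    {N : ℕ} [NeZero N]
    (e : OrthonormalBasis (Fin N) ℂ H)
    (U : H →L[ℂ] H) (hU : U ∈ unitary (H →L[ℂ] H))
    (c : ℝ)
    (hc : c = Finset.univ.sup' Finset.univ_nonempty fun jk : Fin N × Fin N =>
        ‖⟪e jk.2, U (e jk.1)⟫_ℂ‖)
    (ψ : H) (hψ : ‖ψ‖ = 1) :
    shannonEntropy e (U ψ) + shannonEntropy e ψ ≥ -2 * Real.log c := by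
  have hnorm : ∀ v, ‖U v‖ = ‖v‖ := fun v => ContinuousLinearMap.norm_map_of_mem_unitary hU v
  have hinner : ∀ v w, ⟪U v, U w⟫_ℂ = ⟪v, w⟫_ℂ :=
    fun v w => ContinuousLinearMap.inner_map_map_of_mem_unitary hU v w
  set u : Fin N → Fin N → ℂ := fun k j => ⟪e k, U (e j)⟫_ℂ with hu
  have huc : ∀ k j, ‖u k j‖ ≤ c := by
    intro k j
    rw [hc]
    exact Finset.le_sup' (fun jk : Fin N × Fin N => ‖⟪e jk.2, U (e jk.1)⟫_ℂ‖)
      (Finset.mem_univ (j, k))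
  have hc0 : 0 < c := by
    by_contra hcon
    have hz : ∀ k, u k 0 = 0 := fun k =>
      norm_le_zero_iff.1 ((huc k 0).trans (not_lt.1 hcon))
    have h2 := e.sum_sq_norm_inner_right (U (e 0))
    rw [hnorm, e.norm_eq_one] at h2
    simp only [hu] at hz
    simp [hz] at h2
  set x : Fin N → ℂ := fun j => ⟪e j, ψ⟫_ℂ with hx
  set y : Fin N → ℂ := fun k => ⟪e k, U ψ⟫_ℂ with hy
  have hx1 : ∑ j, ‖x j‖ ^ 2 = 1 := by
    rw [e.sum_sq_norm_inner_right, hψ, one_pow]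
  have hy1 : ∑ j, ‖y j‖ ^ 2 = 1 := by
    rw [e.sum_sq_norm_inner_right, hnorm, hψ, one_pow]
  have hyu : ∀ k, ∑ j, u k j * x j = y k := by
    intro k
    simp only [hy]
    conv_rhs => rw [← e.sum_repr' ψ]
    simp only [map_sum, map_smul, inner_sum, inner_smul_right, hu, hx]
    exact Finset.sum_congr rfl fun j _ => mul_comm _ _
  have hxu : ∀ j, ∑ k, conj (y k) * u k j = conj (x j) := by
    intro j
    have := e.sum_inner_mul_inner (U ψ) (U (e j))
    rw [hinner] at this
    simp only [hx, hy, hu, inner_conj_symm]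
    exact this
  have hbil : ∀ a b : Fin N → ℂ, ∑ k, ‖a k‖ ^ 2 = 1 → ∑ k, ‖b k‖ ^ 2 = 1 →
      ‖∑ p : Fin N × Fin N, conj (a p.1) * u p.1 p.2 * b p.2‖ ≤ 1 := by
    intro a b hA hB
    have hn : ∀ a : Fin N → ℂ, ∑ k, ‖a k‖ ^ 2 = 1 → ‖∑ k, a k • e k‖ = 1 := by
      intro a hA
      have h2 := e.sum_sq_norm_inner_right (∑ k, a k • e k)
      simp only [e.orthonormal.inner_right_fintype, hA] at h2
      have := norm_nonneg (∑ k, a k • e k)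
      nlinarith
    have : ∑ p : Fin N × Fin N, conj (a p.1) * u p.1 p.2 * b p.2
        = ⟪∑ k, a k • e k, U (∑ k, b k • e k)⟫_ℂ := by
      rw [Fintype.sum_prod_type]
      simp only [map_sum, map_smul, inner_sum, sum_inner, inner_smul_left, inner_smul_right, hu]
      rw [Finset.sum_comm]
      refine Finset.sum_congr rfl fun j _ => ?_
      rw [Finset.mul_sum]
      exact Finset.sum_congr rfl fun k _ => by ring
    rw [this]
    refine (norm_inner_le_norm _ _).trans ?_
    rw [hnorm, hn a hA, hn b hB, one_mul]
  have main := mu_deriv_bound Finset.univ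
    (fun p : Fin N × Fin N => conj (y p.1) * u p.1 p.2 * x p.2)
    (fun p => Real.log ‖y p.1‖ + Real.log ‖x p.2‖) c hc0 ?_ ?_ ?_
  · have e1 : ∑ p : Fin N × Fin N, conj (y p.1) * u p.1 p.2 * x p.2 *
        ((Real.log ‖y p.1‖ + Real.log ‖x p.2‖ : ℝ) : ℂ)
        = ((∑ k, ‖y k‖ ^ 2 * Real.log ‖y k‖ + ∑ j, ‖x j‖ ^ 2 * Real.log ‖x j‖ : ℝ) : ℂ) := by
      simp only [ofReal_add, mul_add, Finset.sum_add_distrib, ofReal_sum, ofReal_mul, ofReal_pow]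
      congr 1
      · rw [Fintype.sum_prod_type]
        refine Finset.sum_congr rfl fun k _ => ?_
        have h3 : conj (y k) * y k = ∑ j, conj (y k) * u k j * x j := by
          simp only [mul_assoc, ← Finset.mul_sum, hyu]
        rw [← Complex.conj_mul', h3, Finset.sum_mul]
      · rw [Fintype.sum_prod_type_right]
        refine Finset.sum_congr rfl fun j _ => ?_
        rw [← Complex.conj_mul', ← hxu j, Finset.sum_mul, Finset.sum_mul]
    rw [e1, ofReal_re] at main
    have ent : ∀ a : Fin N → ℂ, ∑ k, _root_.eta (‖a k‖ ^ 2) = -2 * ∑ k, ‖a k‖ ^ 2 * Real.log ‖a k‖ := by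
      intro a
      rw [Finset.mul_sum]
      refine Finset.sum_congr rfl fun k _ => ?_
      rw [_root_.eta, Real.log_pow]; push_cast; ring
    have e2 := ent x
    have e3 := ent y
    simp only [shannonEntropy]
    change ∑ k, _root_.eta (‖y k‖ ^ 2) + ∑ k, _root_.eta (‖x k‖ ^ 2) ≥ _
    rw [e2, e3]; linarith
  · rw [Fintype.sum_prod_type]
    simp only [mul_assoc, ← Finset.mul_sum, hyu, Complex.conj_mul']
    exact_mod_cast hy1
  · intro z hz
    have hE : ∀ r : ℝ, ‖exp (z * r)‖ = 1 := by
      intro r; rw [Complex.norm_exp]; simp [hz]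
    have := hbil (fun k => y k * conj (exp (z * Real.log ‖y k‖)))
      (fun k => x k * exp (z * Real.log ‖x k‖))
      (by simpa only [norm_mul, RCLike.norm_conj, hE, mul_one] using hy1)
      (by simpa only [norm_mul, hE, mul_one] using hx1)
    refine le_of_eq_of_le ?_ this
    congr 1
    refine Finset.sum_congr rfl fun p _ => ?_
    rw [ofReal_add, mul_add, Complex.exp_add, map_mul, conj_conj]
    ring
  · intro z hz
    have hE : ∀ a : ℂ, ‖a‖ * Real.exp (Real.log ‖a‖) = ‖a‖ ^ 2 := by
      intro a
      rcases eq_or_ne a 0 with rfl | h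
      · simp
      · rw [Real.exp_log (norm_pos_iff.2 h), sq]
    calc _ ≤ ∑ p : Fin N × Fin N, c * (‖y p.1‖ ^ 2 * ‖x p.2‖ ^ 2) := by
          refine (norm_sum_le _ _).trans (Finset.sum_le_sum fun p _ => ?_)
          rw [← hE, ← hE, norm_mul, Complex.norm_exp, norm_mul, norm_mul, RCLike.norm_conj]
          simp only [mul_re, ofReal_re, ofReal_im, mul_zero, sub_zero, hz, one_mul, Real.exp_add]
          calc _ = ‖u p.1 p.2‖ * (‖y p.1‖ * Real.exp (Real.log ‖y p.1‖) *
                (‖x p.2‖ * Real.exp (Real.log ‖x p.2‖))) := by ring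
            _ ≤ _ := by gcongr; exact huc _ _
      _ = c := by
          rw [← Finset.mul_sum, Fintype.sum_prod_type]
          simp only [← Finset.mul_sum, hx1, mul_one, hy1]
end

section
/- Entropy lower bound for eigenvectors of a unitary matrix: let (e_k)_{k=1}^N be an orthonormal basis of an N-dimensional complex Hilbert space H, U a unitary operator on H, and c(U) = max_{j,k} |⟨e_k, U e_j⟩|. If ψ ∈ H is a unit vector with Uψ = λψ for some scalar λ, then h(ψ) ≥ −log c(U), where h(ψ) = Σ_{k=1}^N η(|⟨e_k, ψ⟩|²). -/
open Finset
open scoped InnerProductSpace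

open Complex Filter Topology in
lemma core_deriv_bound {N : ℕ} (u : Fin N → Fin N → ℂ) (a : Fin N → ℂ) (c : ℝ) (hc : 0 < c)
    (hu : ∀ k j, ‖u k j‖ ≤ c)
    (hcontr : ∀ v w : Fin N → ℂ, ∑ k, ‖v k‖ ^ 2 = 1 → ∑ k, ‖w k‖ ^ 2 = 1 →
      ‖∑ k, ∑ j, w k * u k j * v j‖ ≤ 1)
    (ha : ∑ k, ‖a k‖ ^ 2 = 1)
    (hrow : ∀ k, ∑ j, u k j * a j = a k)
    (hcol : ∀ j, ∑ k, (starRingEnd ℂ) (a k) * u k j = (starRingEnd ℂ) (a j)) :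
    2 * ∑ k, ‖a k‖ ^ 2 * Real.log ‖a k‖ ≤ Real.log c := by
  set l : Fin N → ℝ := fun k => Real.log ‖a k‖ with hl
  set F : ℂ → ℂ := fun z => ∑ k, ∑ j, (starRingEnd ℂ) (a k) * u k j * a j *
    Complex.exp (z * ((l k + l j : ℝ) : ℂ)) with hF
  have hF2 : ∀ z, F z = ∑ k, ∑ j, ((starRingEnd ℂ) (a k) * Complex.exp (z * (l k : ℂ))) * u k j *
      (a j * Complex.exp (z * (l j : ℂ))) := by
    intro z
    refine Finset.sum_congr rfl fun k _ => Finset.sum_congr rfl fun j _ => ?_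
    push_cast
    rw [mul_add, Complex.exp_add]
    ring
  have hnorm : ∀ (z : ℂ) (s : ℝ), ‖Complex.exp (z * (s : ℂ))‖ = Real.exp (z.re * s) := by
    intro z s
    rw [Complex.norm_exp]
    simp
  have hone : ∀ z : ℂ, z.re = 1 → ∀ k, ‖a k‖ * ‖Complex.exp (z * (l k : ℂ))‖ = ‖a k‖ ^ 2 := by
    intro z hz k
    rw [hnorm, hz, one_mul]
    by_cases h : a k = 0
    · simp [h]
    · rw [hl, Real.exp_log (norm_pos_iff.mpr h), sq]
  have hderiv : ∀ z, HasDerivAt F (∑ k, ∑ j, (starRingEnd ℂ) (a k) * u k j * a j *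
      (Complex.exp (z * ((l k + l j : ℝ) : ℂ)) * ((l k + l j : ℝ) : ℂ))) z := by
    intro z
    refine HasDerivAt.fun_sum fun k _ => HasDerivAt.fun_sum fun j _ => ?_
    exact ((hasDerivAt_mul_const _).cexp).const_mul _
  have hdiff : Differentiable ℂ F := fun z => (hderiv z).differentiableAt
  have hbdd : BddAbove ((norm ∘ F) '' Complex.HadamardThreeLines.verticalClosedStrip 0 1) := by
    refine ⟨∑ k, ∑ j, ‖(starRingEnd ℂ) (a k) * u k j * a j‖ * Real.exp |l k + l j|, ?_⟩
    rintro _ ⟨z, hz, rfl⟩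
    have hz' : 0 ≤ z.re ∧ z.re ≤ 1 := hz
    refine (norm_sum_le _ _).trans (Finset.sum_le_sum fun k _ => ?_)
    refine (norm_sum_le _ _).trans (Finset.sum_le_sum fun j _ => ?_)
    rw [norm_mul, hnorm]
    gcongr
    calc z.re * (l k + l j) ≤ z.re * |l k + l j| :=
          mul_le_mul_of_nonneg_left (le_abs_self _) hz'.1
      _ ≤ 1 * |l k + l j| := mul_le_mul_of_nonneg_right hz'.2 (abs_nonneg _)
      _ = _ := one_mul _
  have h0 : ∀ z ∈ Complex.re ⁻¹' {(0 : ℝ)}, ‖F z‖ ≤ 1 := by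
    intro z hz
    have hz' : z.re = 0 := hz
    rw [hF2]
    apply hcontr
    · rw [← ha]
      refine Finset.sum_congr rfl fun k _ => ?_
      rw [norm_mul, hnorm, hz']; simp
    · rw [← ha]
      refine Finset.sum_congr rfl fun k _ => ?_
      rw [norm_mul, hnorm, hz']; simp
  have h1 : ∀ z ∈ Complex.re ⁻¹' {(1 : ℝ)}, ‖F z‖ ≤ c := by
    intro z hz
    have hz' : z.re = 1 := hz
    rw [hF2]
    calc _ ≤ ∑ k, ∑ j, ‖a k‖ ^ 2 * c * ‖a j‖ ^ 2 := by
          refine (norm_sum_le _ _).trans (Finset.sum_le_sum fun k _ => ?_)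
          refine (norm_sum_le _ _).trans (Finset.sum_le_sum fun j _ => ?_)
          rw [norm_mul, norm_mul, norm_mul, norm_mul, RCLike.norm_conj, hone z hz', hone z hz']
          gcongr
          exact hu k j
      _ = c := by
          simp_rw [← Finset.mul_sum, ha, mul_one, ← Finset.sum_mul, ha, one_mul]
  have hle : ∀ x : ℝ, 0 ≤ x → x ≤ 1 → (F (x : ℂ)).re ≤ c ^ x := by
    intro x hx0 hx1
    have := Complex.HadamardThreeLines.norm_le_interp_of_mem_verticalClosedStrip₀₁' F
      (z := (x : ℂ)) (a := 1) (b := c) (show _ ∧ _ by simpa using ⟨hx0, hx1⟩)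
      hdiff.diffContOnCl hbdd h0 h1
    simp only [Real.one_rpow, one_mul, Complex.ofReal_re] at this
    exact (Complex.re_le_norm _).trans this
  have hsq : ∀ k, (starRingEnd ℂ) (a k) * a k = ((‖a k‖ ^ 2 : ℝ) : ℂ) := by
    intro k
    rw [Complex.conj_mul']; norm_cast
  have hF0 : F 0 = 1 := by
    simp only [hF, zero_mul, Complex.exp_zero, mul_one, mul_assoc, ← Finset.mul_sum, hrow, hsq]
    exact_mod_cast ha
  have hD0 : (∑ k, ∑ j, (starRingEnd ℂ) (a k) * u k j * a j *
      (Complex.exp (((0 : ℝ) : ℂ) * ((l k + l j : ℝ) : ℂ)) * ((l k + l j : ℝ) : ℂ)))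
      = ((2 * ∑ k, ‖a k‖ ^ 2 * l k : ℝ) : ℂ) := by
    have e1 : ∑ k, ∑ j, (starRingEnd ℂ) (a k) * u k j * a j * (l k : ℂ)
        = ((∑ k, ‖a k‖ ^ 2 * l k : ℝ) : ℂ) := by
      rw [Complex.ofReal_sum]
      refine Finset.sum_congr rfl fun k _ => ?_
      rw [← Finset.sum_mul]
      simp only [mul_assoc]
      rw [← Finset.mul_sum, hrow, hsq]
      push_cast; ring
    have e2 : ∑ k, ∑ j, (starRingEnd ℂ) (a k) * u k j * a j * (l j : ℂ)
        = ((∑ k, ‖a k‖ ^ 2 * l k : ℝ) : ℂ) := by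
      rw [Finset.sum_comm, Complex.ofReal_sum]
      refine Finset.sum_congr rfl fun k _ => ?_
      rw [← Finset.sum_mul, ← Finset.sum_mul, hcol, hsq]
      push_cast; ring
    rw [two_mul, Complex.ofReal_add]
    nth_rewrite 1 [← e1]
    rw [← e2]
    simp only [← Finset.sum_add_distrib]
    refine Finset.sum_congr rfl fun k _ => Finset.sum_congr rfl fun j _ => ?_
    simp only [Complex.ofReal_zero, zero_mul, Complex.exp_zero]
    push_cast; ring
  have hd1 : HasDerivAt (fun x : ℝ => (F (x : ℂ)).re) (2 * ∑ k, ‖a k‖ ^ 2 * l k) 0 := by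
    have := (hderiv ((0 : ℝ) : ℂ)).real_of_complex
    rw [hD0, Complex.ofReal_re] at this
    exact this
  have hd2 : HasDerivAt (fun x : ℝ => c ^ x) (Real.log c) 0 := by
    have := (Real.hasStrictDerivAt_const_rpow hc 0).hasDerivAt
    simpa using this
  have hd := hd2.sub hd1
  have ht := hd.hasDerivWithinAt (s := Set.Ioi 0)
  rw [hasDerivWithinAt_iff_tendsto_slope' (by simp)] at ht
  have hnn : 0 ≤ Real.log c - 2 * ∑ k, ‖a k‖ ^ 2 * l k := by
    refine ge_of_tendsto ht ?_
    filter_upwards [Ioo_mem_nhdsGT (zero_lt_one (α := ℝ))] with x hx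
    rw [slope_def_field]
    have := hle x hx.1.le hx.2.le
    simp only [Pi.sub_apply, Complex.ofReal_zero, hF0, Real.rpow_zero, Complex.one_re, sub_self,
      sub_zero]
    exact div_nonneg (by linarith) hx.1.le
  linarith

/-- Entropy lower bound for eigenvectors of a unitary matrix. -/
theorem entropy_lower_bound_eigenvector
    {H : Type*} [NormedAddCommGroup H] [InnerProductSpace ℂ H] [CompleteSpace H]
    {N : ℕ} [NeZero N]
    (e : OrthonormalBasis (Fin N) ℂ H)
    (U : H →L[ℂ] H) (hU : U ∈ unitary (H →L[ℂ] H))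
    (c : ℝ)
    (hc : c = Finset.univ.sup' Finset.univ_nonempty fun jk : Fin N × Fin N =>
        ‖⟪e jk.2, U (e jk.1)⟫_ℂ‖)
    (ψ : H) (hψ : ‖ψ‖ = 1) (lam : ℂ) (heig : U ψ = lam • ψ) :
    shannonEntropy e ψ ≥ -Real.log c := by
  set a : Fin N → ℂ := fun k => ⟪e k, ψ⟫_ℂ with hadef
  have ha : ∑ k, ‖a k‖ ^ 2 = 1 := by
    rw [hadef, e.sum_sq_norm_inner_right, hψ, one_pow]
  have hent : shannonEntropy e ψ = -(2 * ∑ k, ‖a k‖ ^ 2 * Real.log ‖a k‖) := by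
    unfold shannonEntropy eta
    rw [Finset.mul_sum, ← Finset.sum_neg_distrib]
    refine Finset.sum_congr rfl fun k _ => ?_
    rw [Real.log_pow]
    push_cast; ring
  have hle : ∀ k j, ‖⟪e k, U (e j)⟫_ℂ‖ ≤ c := by
    intro k j
    rw [hc]
    exact Finset.le_sup' (fun jk : Fin N × Fin N => ‖⟪e jk.2, U (e jk.1)⟫_ℂ‖)
      (Finset.mem_univ (j, k))
  have hc0 : 0 ≤ c := (norm_nonneg _).trans (hle 0 0)
  rw [ge_iff_le, hent, neg_le_neg_iff]
  rcases hc0.eq_or_lt with h | hcpos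
  · rw [← h, Real.log_zero]
    have : ∑ k, ‖a k‖ ^ 2 * Real.log ‖a k‖ ≤ 0 := by
      refine Finset.sum_nonpos fun k _ => mul_nonpos_of_nonneg_of_nonpos (by positivity) ?_
      refine Real.log_nonpos (norm_nonneg _) ?_
      have := norm_inner_le_norm (𝕜 := ℂ) (e k) ψ
      simpa [hψ] using this
    linarith
  have hlam : ‖lam‖ = 1 := by
    have := U.norm_map_of_mem_unitary hU ψ
    rw [heig, norm_smul, hψ, mul_one] at this
    exact this
  have hlam2 : (starRingEnd ℂ) lam * lam = 1 := by
    rw [Complex.conj_mul', hlam]; norm_num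
  refine core_deriv_bound (fun k j => (starRingEnd ℂ) lam * ⟪e k, U (e j)⟫_ℂ) a c hcpos
    ?_ ?_ ha ?_ ?_
  · intro k j
    rw [norm_mul, RCLike.norm_conj, hlam, one_mul]
    exact hle k j
  · intro v w hv hw
    have hnormsum : ∀ x : Fin N → ℂ, ∑ k, ‖x k‖ ^ 2 = 1 → ‖∑ k, x k • e k‖ = 1 := by
      intro x hx
      have h2 : ‖∑ k, x k • e k‖ ^ 2 = 1 := by
        rw [← e.sum_sq_norm_inner_right, ← hx]
        refine Finset.sum_congr rfl fun k _ => ?_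
        rw [e.orthonormal.inner_right_fintype]
      nlinarith [norm_nonneg (∑ k, x k • e k)]
    have heq : ∑ k, ∑ j, w k * ((starRingEnd ℂ) lam * ⟪e k, U (e j)⟫_ℂ) * v j
        = (starRingEnd ℂ) lam *
          ⟪∑ k, (starRingEnd ℂ) (w k) • e k, U (∑ j, v j • e j)⟫_ℂ := by
      rw [map_sum, sum_inner, Finset.mul_sum]
      refine Finset.sum_congr rfl fun k _ => ?_
      rw [inner_sum, Finset.mul_sum]
      refine Finset.sum_congr rfl fun j _ => ?_
      rw [map_smul, inner_smul_left, inner_smul_right, Complex.conj_conj]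
      ring
    rw [heq, norm_mul, RCLike.norm_conj, hlam, one_mul]
    refine (norm_inner_le_norm _ _).trans ?_
    rw [U.norm_map_of_mem_unitary hU, hnormsum v hv, hnormsum _ (by simpa using hw), one_mul]
  · intro k
    have h : ⟪e k, U ψ⟫_ℂ = ∑ j, ⟪e k, U (e j)⟫_ℂ * a j := by
      conv_lhs => rw [← e.sum_repr' ψ]
      rw [map_sum, inner_sum]
      refine Finset.sum_congr rfl fun j _ => ?_
      rw [map_smul, inner_smul_right, mul_comm]
    simp only [mul_assoc]
    rw [← Finset.mul_sum, ← h, heig, inner_smul_right, ← mul_assoc, hlam2, one_mul]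
  · intro j
    have h := e.sum_inner_mul_inner ψ (U (e j))
    have h3 := U.inner_map_map_of_mem_unitary hU ψ (e j)
    rw [heig, inner_smul_left] at h3
    simp only [hadef, inner_conj_symm]
    rw [← h3, ← h, Finset.mul_sum]
    refine Finset.sum_congr rfl fun k _ => ?_
    ring
end

section
/- Pressure lower bound for eigenvectors, weighted version: let H be a complex Hilbert space, (π_k)_{k=1}^N a partition of unity of bounded operators on H, v = (v_k)_{k=1}^N a family of positive reals with V = max_k v_k, O a bounded operator on H, U a unitary operator on H, and ε ≥ 0. Set c = max_{j,k} v_j · v_k · ‖π_j U π_k* O‖ (operator norm). If ψ ∈ H is a unit vector with Uψ = λψ for some scalar λ with |λ| = 1, and ‖(Id − O) π_k ψ‖ ≤ ε for all k = 1,…,N, then p_{π,v}(ψ) ≥ −log( c + N·V²·ε ). -/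
open Finset

open Complex in
lemma three_lines_deriv {ι : Type*} [Fintype ι] (M : ι → ι → ℂ) (l : ι → ℝ) (C : ℝ) (hC : 0 < C)
    (F : ℂ → ℂ) (hF : ∀ z, F z = ∑ j, ∑ k, exp (z * (l j + l k)) * M j k)
    (h0 : ∀ z : ℂ, z.re = 0 → ‖F z‖ ≤ 1) (h1 : ∀ z : ℂ, z.re = 1 → ‖F z‖ ≤ C)
    (lam : ℂ) (hlam : ‖lam‖ = 1) (hsum : ∑ j, ∑ k, M j k = lam) :
    (star lam * ∑ j, ∑ k, (l j + l k) * M j k).re ≤ Real.log C := by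
  have hFe : F = fun z => ∑ j, ∑ k, exp (z * (l j + l k)) * M j k := funext hF
  have hdiff : Differentiable ℂ F := by
    rw [hFe]; fun_prop
  have hbound : ∀ t ∈ Set.Icc (0:ℝ) 1, ‖F t‖ ≤ C ^ t := by
    intro t ht
    have := HadamardThreeLines.norm_le_interp_of_mem_verticalClosedStrip' (f := F) (z := (t:ℂ))
      (a := 1) (b := C) (l := 0) (u := 1) one_pos
      (by simpa [HadamardThreeLines.verticalClosedStrip] using ht)
      hdiff.diffContOnCl
      (by
        refine ⟨∑ j, ∑ k, Real.exp |l j + l k| * ‖M j k‖, ?_⟩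
        rintro _ ⟨z, hz, rfl⟩
        simp only [HadamardThreeLines.verticalClosedStrip, Set.mem_preimage, Set.mem_Icc] at hz
        simp only [Function.comp, hF]
        refine (norm_sum_le _ _).trans (Finset.sum_le_sum fun j _ => ?_)
        refine (norm_sum_le _ _).trans (Finset.sum_le_sum fun k _ => ?_)
        rw [norm_mul, norm_exp]
        gcongr
        have : (z * (l j + l k)).re = z.re * (l j + l k) := by
          rw [← ofReal_add, re_mul_ofReal]
        rw [this]
        calc _ ≤ |z.re * (l j + l k)| := le_abs_self _
          _ = z.re * |l j + l k| := by rw [abs_mul, abs_of_nonneg hz.1]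
          _ ≤ 1 * |l j + l k| := by gcongr; exact hz.2
          _ = _ := one_mul _)
      (fun z hz => h0 z hz) (fun z hz => h1 z hz)
    simpa using this
  have hderC : HasDerivAt F (∑ j, ∑ k, (l j + l k) * M j k) ((0:ℝ):ℂ) := by
    rw [hFe]
    refine HasDerivAt.fun_sum fun j _ => HasDerivAt.fun_sum fun k _ => ?_
    have h : HasDerivAt (fun z : ℂ => z * ((l j : ℂ) + l k)) ((l j : ℂ) + l k) ((0:ℝ):ℂ) := by
      simpa using (hasDerivAt_id ((0:ℝ):ℂ)).mul_const ((l j : ℂ) + l k)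
    simpa using h.cexp.mul_const (M j k)
  have hder : HasDerivAt (fun t : ℝ => (star lam * F t).re)
      ((star lam * ∑ j, ∑ k, (l j + l k) * M j k).re) 0 :=
    (hderC.const_mul (star lam)).real_of_complex
  have hder2 : HasDerivAt (fun t : ℝ => C ^ t) (Real.log C) 0 := by
    simpa using (hasDerivAt_id (0:ℝ)).const_rpow hC
  have hF0 : F 0 = lam := by rw [hF]; simpa using hsum
  have hd := (hder2.sub hder).hasDerivWithinAt (s := Set.Ioi 0)
  rw [hasDerivWithinAt_iff_tendsto_slope' (by simp)] at hd
  have := ge_of_tendsto (b := 0) hd (by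
    filter_upwards [Ioo_mem_nhdsGT (zero_lt_one' ℝ)] with t ht
    have hb := hbound t ⟨ht.1.le, ht.2.le⟩
    have h2 : (star lam * F t).re ≤ C ^ t := by
      refine (re_le_norm _).trans ?_
      rw [norm_mul, norm_star, hlam, one_mul]; exact hb
    have h3 : (star lam * F ((0:ℝ):ℂ)).re = 1 := by
      rw [ofReal_zero, hF0]
      have : star lam * lam = ((‖lam‖^2 : ℝ) : ℂ) := by
        rw [mul_comm]; simpa using Complex.mul_conj' lam
      rw [this, hlam]; simp
    rw [slope_def_field]
    apply div_nonneg _ (by linarith [ht.1])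
    simp only [Pi.sub_apply, h3, Real.rpow_zero]
    linarith)
  linarith

section
variable {H : Type*} [NormedAddCommGroup H] [InnerProductSpace ℂ H] [CompleteSpace H]
    {N : ℕ} (π : Fin N → H →L[ℂ] H)

local notation "adj" => ContinuousLinearMap.adjoint

lemma pou_apply (hπ : ∑ k, adj (π k) ∘L π k = (1 : H →L[ℂ] H)) (w : H) :
    ∑ k, adj (π k) (π k w) = w := by
  simpa [_root_.sum_apply] using congrArg (fun T : H →L[ℂ] H => T w) hπ

lemma pou_norm (hπ : ∑ k, adj (π k) ∘L π k = (1 : H →L[ℂ] H)) (w : H) :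
    ∑ k, ‖π k w‖ ^ 2 = ‖w‖ ^ 2 := by
  have h := congrArg (fun x => (inner ℂ x w : ℂ).re) (pou_apply π hπ w)
  simp only [sum_inner, ContinuousLinearMap.adjoint_inner_left, Complex.re_sum] at h
  have e : ∀ x : H, (inner ℂ x x : ℂ).re = ‖x‖ ^ 2 := fun x => by
    rw [inner_self_eq_norm_sq_to_K]; norm_cast
  simpa only [e] using h

lemma pou_le (hπ : ∑ k, adj (π k) ∘L π k = (1 : H →L[ℂ] H)) (w : H) (k : Fin N) :
    ‖π k w‖ ≤ ‖w‖ := by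
  have h := pou_norm π hπ w
  have h2 : ‖π k w‖ ^ 2 ≤ ∑ k, ‖π k w‖ ^ 2 :=
    Finset.single_le_sum (f := fun k => ‖π k w‖ ^ 2) (fun _ _ => sq_nonneg _) (Finset.mem_univ k)
  exact le_of_sq_le_sq (by linarith) (norm_nonneg _)

lemma pou_adj (hπ : ∑ k, adj (π k) ∘L π k = (1 : H →L[ℂ] H)) (u : Fin N → H) :
    ‖∑ k, adj (π k) (u k)‖ ^ 2 ≤ ∑ k, ‖u k‖ ^ 2 := by
  set w := ∑ k, adj (π k) (u k) with hw
  have e : (inner ℂ w w : ℂ).re = ‖w‖ ^ 2 := by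
    rw [inner_self_eq_norm_sq_to_K]; norm_cast
  have h : (inner ℂ w w : ℂ).re = ∑ k, (inner ℂ (u k) (π k w) : ℂ).re := by
    conv_lhs => rw [hw, sum_inner]
    simp only [ContinuousLinearMap.adjoint_inner_left, Complex.re_sum, ← hw]
  have h2 : ∑ k, (inner ℂ (u k) (π k w) : ℂ).re ≤ ∑ k, (‖u k‖ ^ 2 + ‖π k w‖ ^ 2) / 2 := by
    refine Finset.sum_le_sum fun k _ => ?_
    have := (Complex.re_le_norm _).trans (norm_inner_le_norm (𝕜 := ℂ) (u k) (π k w))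
    nlinarith [sq_nonneg (‖u k‖ - ‖π k w‖)]
  rw [← Finset.sum_div, Finset.sum_add_distrib, pou_norm π hπ w] at h2
  linarith

end

/-- Pressure lower bound for eigenvectors, weighted version. -/
theorem pressure_lower_bound_eigenvector
    {H : Type*} [NormedAddCommGroup H] [InnerProductSpace ℂ H] [CompleteSpace H]
    {N : ℕ} [NeZero N]
    (π : Fin N → H →L[ℂ] H)
    (hπ : ∑ k, ContinuousLinearMap.adjoint (π k) ∘L π k = (1 : H →L[ℂ] H))
    (v : Fin N → ℝ) (hv : ∀ k, 0 < v k)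
    (V : ℝ) (hV : V = Finset.univ.sup' Finset.univ_nonempty v)
    (O : H →L[ℂ] H)
    (U : H →L[ℂ] H) (hU : U ∈ unitary (H →L[ℂ] H))
    (ε : ℝ) (hε : 0 ≤ ε)
    (c : ℝ)
    (hc : c = Finset.univ.sup' Finset.univ_nonempty fun jk : Fin N × Fin N =>
        v jk.1 * v jk.2 * ‖π jk.1 ∘L U ∘L ContinuousLinearMap.adjoint (π jk.2) ∘L O‖)
    (ψ : H) (hψ : ‖ψ‖ = 1)
    (lam : ℂ) (hlam : ‖lam‖ = 1) (heig : U ψ = lam • ψ)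
    (hloc : ∀ k, ‖((1 : H →L[ℂ] H) - O) (π k ψ)‖ ≤ ε) :
    pressure π v ψ ≥ -Real.log (c + N * V ^ 2 * ε) := by
  have hpn : ∑ k, ‖π k ψ‖ ^ 2 = 1 := by rw [pou_norm π hπ, hψ]; norm_num
  have hple : ∀ k, ‖π k ψ‖ ≤ 1 := fun k => hψ ▸ pou_le π hπ ψ k
  set l : Fin N → ℝ := fun k => Real.log (‖π k ψ‖ * v k) with hl
  have hvV : ∀ k, v k ≤ V := fun k => hV ▸ Finset.le_sup' v (Finset.mem_univ k)
  have hcb : ∀ j k, v j * v k *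
      ‖π j ∘L U ∘L ContinuousLinearMap.adjoint (π k) ∘L O‖ ≤ c := fun j k => by
    rw [hc]
    exact Finset.le_sup' (fun jk : Fin N × Fin N =>
        v jk.1 * v jk.2 * ‖π jk.1 ∘L U ∘L ContinuousLinearMap.adjoint (π jk.2) ∘L O‖)
        (Finset.mem_univ (j, k))
  have hV0 : 0 < V := (hv 0).trans_le (hvV 0)
  have hc0 : 0 ≤ c := le_trans
    (mul_nonneg (mul_nonneg (hv 0).le (hv 0).le) (norm_nonneg _)) (hcb 0 0)
  set A : Fin N → H := fun k => ContinuousLinearMap.adjoint (π k) (π k ψ) with hA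
  have hAsum : ∑ k, A k = ψ := pou_apply π hπ ψ
  set M : Fin N → Fin N → ℂ := fun j k => inner ℂ (A j) (U (A k)) with hM
  have hself : ∀ x : H, inner ℂ x x = ((‖x‖ ^ 2 : ℝ) : ℂ) := fun x => by
    rw [inner_self_eq_norm_sq_to_K]; norm_cast
  have hAl : ∀ j, inner ℂ (A j) ψ = ((‖π j ψ‖ ^ 2 : ℝ) : ℂ) := fun j => by
    rw [hA]; simp only [ContinuousLinearMap.adjoint_inner_left]; exact hself _
  have hAr : ∀ j, inner ℂ ψ (A j) = ((‖π j ψ‖ ^ 2 : ℝ) : ℂ) := fun j => by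
    rw [hA]; simp only [ContinuousLinearMap.adjoint_inner_right]; exact hself _
  have hrow : ∀ j, ∑ k, M j k = lam * ((‖π j ψ‖ ^ 2 : ℝ) : ℂ) := fun j => by
    simp only [hM]
    rw [← inner_sum, ← map_sum, hAsum, heig, inner_smul_right, hAl]
  have hll : lam * star lam = 1 := by
    have := Complex.mul_conj' lam
    rw [hlam] at this; simpa using this
  have hcol : ∀ k, ∑ j, M j k = lam * ((‖π k ψ‖ ^ 2 : ℝ) : ℂ) := fun k => by
    simp only [hM]
    rw [← sum_inner, hAsum]
    have h := ContinuousLinearMap.inner_map_map_of_mem_unitary hU ψ (A k)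
    rw [heig, inner_smul_left, hAr] at h
    rw [← h, ← mul_assoc]
    change _ = lam * star lam * _
    rw [hll, one_mul]
  have hsum : ∑ j, ∑ k, M j k = lam := by
    simp only [hrow]
    rw [← Finset.mul_sum, ← Complex.ofReal_sum, hpn]; simp
  have hpl : ∀ k, ‖π k ψ‖ ^ 2 * l k * 2 =
      -(eta (‖π k ψ‖ ^ 2) - ‖π k ψ‖ ^ 2 * Real.log (v k ^ 2)) := fun k => by
    rcases eq_or_ne (‖π k ψ‖) 0 with h | h
    · simp [h, eta]
    · simp only [hl, eta]
      rw [Real.log_mul h (hv k).ne', Real.log_pow, Real.log_pow]; push_cast; ring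
  have hD : ∑ j, ∑ k, ((l j : ℂ) + l k) * M j k = lam * ((-(pressure π v ψ) : ℝ) : ℂ) := by
    have e1 : ∑ j, ∑ k, ((l j : ℂ) + l k) * M j k =
        ∑ j, (l j : ℂ) * ∑ k, M j k + ∑ k, (l k : ℂ) * ∑ j, M j k := by
      simp only [add_mul, Finset.sum_add_distrib, Finset.mul_sum]
      congr 1
      exact Finset.sum_comm
    have e2 : -(pressure π v ψ) = ∑ k, ‖π k ψ‖ ^ 2 * l k * 2 := by
      simp only [hpl, pressure, Finset.sum_neg_distrib, Finset.sum_sub_distrib]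
    rw [e1, e2]
    simp only [hrow, hcol]
    rw [← Finset.sum_add_distrib, Complex.ofReal_sum, Finset.mul_sum]
    refine Finset.sum_congr rfl fun k _ => ?_
    push_cast; ring
  set F : ℂ → ℂ := fun z => ∑ j, ∑ k, Complex.exp (z * (l j + l k)) * M j k with hF
  have hre : ∀ (z : ℂ) k, ‖Complex.exp (z * l k)‖ = Real.exp (z.re * l k) := fun z k => by
    rw [Complex.norm_exp, Complex.re_mul_ofReal]
  have h0 : ∀ z : ℂ, z.re = 0 → ‖F z‖ ≤ 1 := fun z hz => by
    have hFz : F z = inner ℂ (∑ j, star (Complex.exp (z * l j)) • A j)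
        (U (∑ k, Complex.exp (z * l k) • A k)) := by
      simp only [hF, hM]
      rw [sum_inner]
      refine Finset.sum_congr rfl fun j _ => ?_
      rw [map_sum, inner_sum]
      refine Finset.sum_congr rfl fun k _ => ?_
      rw [map_smul, inner_smul_left, inner_smul_right, mul_add, Complex.exp_add]
      simp [mul_assoc]
    have hb : ∀ f : Fin N → ℂ, (∀ k, ‖f k‖ = 1) → ‖∑ k, f k • A k‖ ≤ 1 := fun f hf => by
      have h := pou_adj π hπ (fun k => f k • π k ψ)
      simp only [map_smul, norm_smul, hf, one_mul, hpn] at h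
      exact le_of_sq_le_sq (by simpa using h) zero_le_one
    rw [hFz]
    refine (norm_inner_le_norm _ _).trans ?_
    rw [ContinuousLinearMap.norm_map_of_mem_unitary hU]
    exact mul_le_one₀ (hb _ fun k => by rw [norm_star, hre, hz]; simp) (norm_nonneg _)
      (hb _ fun k => by rw [hre, hz]; simp)
  have hMb : ∀ j k, ‖M j k‖ ≤ ‖π j ψ‖ *
      (‖π j ∘L U ∘L ContinuousLinearMap.adjoint (π k) ∘L O‖ * ‖π k ψ‖ + ε) := fun j k => by
    have e : M j k = inner ℂ (π j ψ) (π j (U (A k))) := by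
      exact ContinuousLinearMap.adjoint_inner_left (π j) (U (A k)) (π j ψ)
    have hadj : ∀ x, ‖ContinuousLinearMap.adjoint (π k) x‖ ≤ ‖x‖ := fun x => by
      have h := pou_adj π hπ (fun i => if i = k then x else 0)
      have h1 : ∑ i, ContinuousLinearMap.adjoint (π i) (if i = k then x else 0)
          = ContinuousLinearMap.adjoint (π k) x := by
        rw [Finset.sum_eq_single k] <;> simp +contextual
      have h2 : ∑ i, ‖(if i = k then x else 0 : H)‖ ^ 2 = ‖x‖ ^ 2 := by
        rw [Finset.sum_eq_single k] <;> simp +contextual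
      rw [h1, h2] at h
      exact le_of_sq_le_sq h (norm_nonneg _)
    have e2 : π j (U (A k)) =
        (π j ∘L U ∘L ContinuousLinearMap.adjoint (π k) ∘L O) (π k ψ) +
        π j (U (ContinuousLinearMap.adjoint (π k) (((1 : H →L[ℂ] H) - O) (π k ψ)))) := by
      simp [hA]
    rw [e]
    refine (norm_inner_le_norm _ _).trans ?_
    gcongr
    rw [e2]
    refine (norm_add_le _ _).trans (add_le_add (ContinuousLinearMap.le_opNorm _ _) ?_)
    refine (pou_le π hπ _ j).trans ?_
    rw [ContinuousLinearMap.norm_map_of_mem_unitary hU]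
    exact (hadj _).trans (hloc k)
  have hterm : ∀ (z : ℂ), z.re = 1 → ∀ j k, ‖Complex.exp (z * (l j + l k)) * M j k‖ ≤
      ‖π j ψ‖ ^ 2 * ‖π k ψ‖ ^ 2 * c + ‖π j ψ‖ ^ 2 * (V ^ 2 * ε) := fun z hz j k => by
    rcases eq_or_ne (‖π j ψ‖) 0 with hj | hj
    · have : A j = 0 := by simp [hA, norm_eq_zero.1 hj]
      simp [hM, this, hj]
    rcases eq_or_ne (‖π k ψ‖) 0 with hk | hk
    · have : A k = 0 := by simp [hA, norm_eq_zero.1 hk]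
      simp only [hM, this, map_zero, inner_zero_right, mul_zero, norm_zero]
      positivity
    have hj' : 0 < ‖π j ψ‖ := lt_of_le_of_ne (norm_nonneg _) hj.symm
    have hk' : 0 < ‖π k ψ‖ := lt_of_le_of_ne (norm_nonneg _) hk.symm
    have hvj := hv j
    have hvk := hv k
    rw [norm_mul, mul_add, Complex.exp_add, norm_mul, hre, hre, hz, one_mul, one_mul, hl]
    simp only
    rw [Real.exp_log (by positivity), Real.exp_log (by positivity)]
    set Q := ‖π j ∘L U ∘L ContinuousLinearMap.adjoint (π k) ∘L O‖ with hQ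
    calc _ ≤ ‖π j ψ‖ * v j * (‖π k ψ‖ * v k) * (‖π j ψ‖ * (Q * ‖π k ψ‖ + ε)) := by
          gcongr; exact hMb j k
      _ = ‖π j ψ‖ ^ 2 * ‖π k ψ‖ ^ 2 * (v j * v k * Q) +
          ‖π j ψ‖ ^ 2 * (v j * v k * (‖π k ψ‖ * ε)) := by ring
      _ ≤ ‖π j ψ‖ ^ 2 * ‖π k ψ‖ ^ 2 * c + ‖π j ψ‖ ^ 2 * (V * V * (1 * ε)) := by
          gcongr
          · exact hcb j k
          · exact hvV j
          · exact hvV k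
          · exact hple k
      _ = _ := by ring
  have h1 : ∀ z : ℂ, z.re = 1 → ‖F z‖ ≤ c + N * V ^ 2 * ε := fun z hz => by
    have hs : ∑ j, ∑ k, (‖π j ψ‖ ^ 2 * ‖π k ψ‖ ^ 2 * c + ‖π j ψ‖ ^ 2 * (V ^ 2 * ε)) =
        c + N * V ^ 2 * ε := by
      simp only [Finset.sum_add_distrib, ← Finset.sum_mul, ← Finset.mul_sum, hpn,
        Finset.sum_const, Finset.card_univ, Fintype.card_fin, nsmul_eq_mul]
      ring
    rw [← hs]
    simp only [hF]
    refine (norm_sum_le _ _).trans (Finset.sum_le_sum fun j _ => ?_)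
    exact (norm_sum_le _ _).trans (Finset.sum_le_sum fun k _ => hterm z hz j k)
  have key : ∀ C : ℝ, c + N * V ^ 2 * ε < C → Real.exp (-(pressure π v ψ)) ≤ C := fun C hC => by
    have hC0 : 0 < C := lt_of_le_of_lt (by positivity) hC
    have h := three_lines_deriv M l C hC0 F (fun _ => rfl) h0
      (fun z hz => (h1 z hz).trans hC.le) lam hlam hsum
    rw [hD, ← mul_assoc, mul_comm (star lam), hll, one_mul, Complex.ofReal_re] at h
    exact (Real.le_log_iff_exp_le hC0).1 h
  have hfin : Real.exp (-(pressure π v ψ)) ≤ c + N * V ^ 2 * ε := le_of_forall_gt_imp_ge_of_dense key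
  have := (Real.le_log_iff_exp_le (lt_of_lt_of_le (Real.exp_pos _) hfin)).2 hfin
  linarith
end

section
/- Upper semicontinuity of the partition entropy rate along weakly convergent invariant measures: let X be a compact metric space, T : X → X a continuous map, and P = (E_1, …, E_K) a finite partition of X into Borel sets. Let (μ_i)_{i∈ℕ} and μ be Borel probability measures on X, each invariant under T, such that μ_i → μ in the topology of weak convergence of probability measures, and suppose μ(∂E_k) = 0 for every k = 1,…,K (∂ denotes the topological boundary). Then h_KS(μ,P) ≥ limsup_{i→∞} h_KS(μ_i,P), where h_KS(ν,P) := inf_{n≥1} h_n(ν,P)/n. -/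
open MeasureTheory Finset Filter

/-- Cylinder set `E_α = E_{α_0} ∩ T⁻¹E_{α_1} ∩ … ∩ T^{-(n-1)}E_{α_{n-1}}`. -/
def cyl {X : Type*} {K : ℕ} (T : X → X) (E : Fin K → Set X)
    (n : ℕ) (α : Fin n → Fin K) : Set X :=
  ⋂ j : Fin n, T^[(j : ℕ)] ⁻¹' E (α j)

/-- Refined entropy `h_n(μ, P) = Σ_α η(μ(E_α))`. -/
noncomputable def refEntropy {X : Type*} [MeasurableSpace X] (μ : Measure X)
    {K : ℕ} (T : X → X) (E : Fin K → Set X) (n : ℕ) : ℝ :=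
  ∑ α : Fin n → Fin K, eta (μ (cyl T E n α)).toReal

/-- Entropy of an invariant measure relative to the partition:
`h_KS(ν, P) = inf_{n ≥ 1} h_n(ν, P)/n`. -/
noncomputable def hKS {X : Type*} [MeasurableSpace X] (μ : Measure X)
    {K : ℕ} (T : X → X) (E : Fin K → Set X) : ℝ :=
  ⨅ n : {m : ℕ // 1 ≤ m}, refEntropy μ T E n / (n : ℝ)

theorem eta_eq : eta = Real.negMulLog := by
  funext s; simp [eta, Real.negMulLog]

theorem frontier_iInter_fin_subset {X : Type*} [TopologicalSpace X] {n : ℕ}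
    (A : Fin n → Set X) : frontier (⋂ j, A j) ⊆ ⋃ j, frontier (A j) := by
  intro x hx
  by_contra h
  simp only [Set.mem_iUnion, not_exists] at h
  apply hx.2
  rw [interior_iInter_of_finite]
  refine Set.mem_iInter.2 fun j => ?_
  by_contra hj
  exact h j ⟨closure_mono (Set.iInter_subset A j) hx.1, hj⟩

theorem refEntropy_div_nonneg {X : Type*} [MeasurableSpace X] (ν : ProbabilityMeasure X)
    {K : ℕ} (T : X → X) (E : Fin K → Set X) (n : ℕ) :
    0 ≤ refEntropy (ν : Measure X) T E n / (n : ℝ) := by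
  refine div_nonneg (Finset.sum_nonneg fun α _ => ?_) (Nat.cast_nonneg n)
  rw [eta_eq]
  exact Real.negMulLog_nonneg ENNReal.toReal_nonneg
    (measureReal_le_one (μ := (ν : Measure X)))

/-- Upper semicontinuity of the partition entropy rate along weakly convergent
invariant measures. -/
theorem hKS_upper_semicontinuous
    {X : Type*} [MetricSpace X] [CompactSpace X] [MeasurableSpace X] [BorelSpace X]
    (T : X → X) (hTcont : Continuous T)
    {K : ℕ} (E : Fin K → Set X)
    (hmeas : ∀ k, MeasurableSet (E k))
    (hdisj : Pairwise (Function.onFun Disjoint E))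
    (hcover : (⋃ k, E k) = Set.univ)
    (μs : ℕ → ProbabilityMeasure X) (μ : ProbabilityMeasure X)
    (hinv : ∀ i, MeasurePreserving T (μs i : Measure X) (μs i : Measure X))
    (hinvμ : MeasurePreserving T (μ : Measure X) (μ : Measure X))
    (hconv : Tendsto μs atTop (nhds μ))
    (hbd : ∀ k, (μ : Measure X) (frontier (E k)) = 0) :
    hKS (μ : Measure X) T E ≥ atTop.limsup (fun i => hKS (μs i : Measure X) T E) := by
  haveI : Nonempty {m : ℕ // 1 ≤ m} := ⟨⟨1, le_refl 1⟩⟩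
  refine le_ciInf fun n => ?_
  have hlim : Tendsto (fun i => refEntropy (μs i : Measure X) T E n / ((n : ℕ) : ℝ)) atTop
      (nhds (refEntropy (μ : Measure X) T E n / ((n : ℕ) : ℝ))) := by
    refine Tendsto.div_const (tendsto_finset_sum _ fun α _ => ?_) _
    rw [eta_eq]
    refine (Real.continuous_negMulLog.tendsto _).comp ?_
    refine (ENNReal.tendsto_toReal (measure_ne_top _ _)).comp ?_
    refine ProbabilityMeasure.tendsto_measure_of_null_frontier_of_tendsto' hconv ?_
    refine measure_mono_null (frontier_iInter_fin_subset _) (measure_iUnion_null fun j => ?_)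
    refine measure_mono_null ((hTcont.iterate j).frontier_preimage_subset _) ?_
    rw [(hinvμ.iterate j).measure_preimage isClosed_frontier.measurableSet.nullMeasurableSet]
    exact hbd _
  have hle : ∀ i, hKS (μs i : Measure X) T E ≤
      refEntropy (μs i : Measure X) T E n / ((n : ℕ) : ℝ) := fun i =>
    ciInf_le ⟨0, by rintro _ ⟨m, rfl⟩; exact refEntropy_div_nonneg (μs i) T E m⟩ n
  have hnn : ∀ i, 0 ≤ hKS (μs i : Measure X) T E := fun i =>
    le_ciInf fun m => refEntropy_div_nonneg (μs i) T E m
  rw [← hlim.limsup_eq]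
  refine limsup_le_limsup (Eventually.of_forall hle) ?_ hlim.isBoundedUnder_le
  exact IsBoundedUnder.isCoboundedUnder_le (isBoundedUnder_of ⟨0, hnn⟩)
end

section
/- Entropy bound for a weak limit of measures with uniformly decaying cylinder measures: let X be a compact metric space, T : X → X a continuous map, and P = (E_1, …, E_K) a finite partition of X into Borel sets. Let (μ_i)_{i∈ℕ} and μ be Borel probability measures on X, each invariant under T, such that μ_i → μ weakly and μ(∂E_k) = 0 for every k. Suppose there exists β ∈ ℝ such that for every i there is a constant C_i > 0 with μ_i(E_α) ≤ C_i·e^{−βn} for all n ≥ 1 and all α ∈ {1,…,K}^n. Then h_KS(μ,P) ≥ β, where h_KS(ν,P) := inf_{n≥1} h_n(ν,P)/n. -/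
open MeasureTheory Finset Filter

lemma eta_sum_le {A B : Type*} [Fintype A] [Fintype B] (p : A → B → ℝ) (hp : ∀ a b, 0 ≤ p a b)
    (u : A → ℝ) (v : B → ℝ) (hu : ∀ a, ∑ b, p a b = u a) (hv : ∀ b, ∑ a, p a b = v b)
    (hu1 : ∑ a, u a = 1) (hv1 : ∑ b, v b = 1) :
    ∑ a, ∑ b, eta (p a b) ≤ ∑ a, eta (u a) + ∑ b, eta (v b) := by
  have e1 : ∑ a, eta (u a) = ∑ a, ∑ b, -(p a b * Real.log (u a)) := by
    refine Finset.sum_congr rfl fun a _ => ?_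
    rw [Finset.sum_neg_distrib, ← Finset.sum_mul, hu]; simp [eta]
  have e2 : ∑ b, eta (v b) = ∑ a, ∑ b, -(p a b * Real.log (v b)) := by
    rw [Finset.sum_comm]
    refine Finset.sum_congr rfl fun b _ => ?_
    rw [Finset.sum_neg_distrib, ← Finset.sum_mul, hv]; simp [eta]
  have e3 : ∑ a, ∑ b, (u a * v b - p a b) = 0 := by
    simp only [Finset.sum_sub_distrib, ← Finset.mul_sum, hv1, hu, mul_one, sub_self, Finset.sum_const_zero]
  have key : ∀ a b, eta (p a b) ≤ -(p a b * Real.log (u a)) + -(p a b * Real.log (v b))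
      + (u a * v b - p a b) := by
    intro a b
    have hua : p a b ≤ u a := by
      rw [← hu]; exact Finset.single_le_sum (f := fun b => p a b) (fun b _ => hp a b) (Finset.mem_univ b)
    have hvb : p a b ≤ v b := by
      rw [← hv]; exact Finset.single_le_sum (f := fun a => p a b) (fun a _ => hp a b) (Finset.mem_univ a)
    rcases (hp a b).eq_or_lt with h | h
    · rw [← h] at hua hvb ⊢
      simp [eta]; positivity
    · have hu0 : 0 < u a := by linarith
      have hv0 : 0 < v b := by linarith
      have hl := Real.log_le_sub_one_of_pos (x := u a * v b / p a b) (by positivity)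
      rw [Real.log_div (by positivity) (by positivity), Real.log_mul (by positivity) (by positivity)] at hl
      have h2 := mul_le_mul_of_nonneg_left hl h.le
      have h3 : p a b * (u a * v b / p a b - 1) = u a * v b - p a b := by field_simp
      rw [h3] at h2
      unfold eta; nlinarith
  calc ∑ a, ∑ b, eta (p a b) ≤ ∑ a, ∑ b, (-(p a b * Real.log (u a)) + -(p a b * Real.log (v b))
      + (u a * v b - p a b)) := Finset.sum_le_sum fun a _ => Finset.sum_le_sum fun b _ => key a b
    _ = _ := by
      simp only [Finset.sum_add_distrib] at *
      rw [e3, e1, e2, add_zero]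

section aux
variable {X : Type*} [MeasurableSpace X] {K : ℕ} {T : X → X} {E : Fin K → Set X}

lemma cyl_meas (hT : Measurable T) (hmeas : ∀ k, MeasurableSet (E k)) (n : ℕ) (α : Fin n → Fin K) :
    MeasurableSet (cyl T E n α) :=
  MeasurableSet.iInter fun j => (hT.iterate j) (hmeas _)

lemma cyl_disj (hdisj : Pairwise (Function.onFun Disjoint E)) (n : ℕ) :
    Pairwise (Function.onFun Disjoint (cyl T E n)) := by
  intro α α' h
  obtain ⟨j, hj⟩ := Function.ne_iff.1 h
  refine Set.disjoint_left.2 fun x hx hx' => ?_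
  exact Set.disjoint_left.1 (hdisj hj) (Set.mem_iInter.1 hx j) (Set.mem_iInter.1 hx' j)

lemma cyl_cover (hcover : (⋃ k, E k) = Set.univ) (n : ℕ) : (⋃ α, cyl T E n α) = Set.univ := by
  refine Set.eq_univ_of_forall fun x => ?_
  have h : ∀ y, ∃ k, y ∈ E k := fun y => by
    have := Set.mem_univ y
    rw [← hcover] at this; simpa using this
  choose f hf using h
  exact Set.mem_iUnion.2 ⟨fun j => f (T^[(j : ℕ)] x), Set.mem_iInter.2 fun j => hf _⟩

lemma cyl_append (m n : ℕ) (a : Fin m → Fin K) (b : Fin n → Fin K) :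
    cyl T E (m + n) (Fin.append a b) = cyl T E m a ∩ T^[m] ⁻¹' cyl T E n b := by
  ext x
  simp only [cyl, Set.mem_iInter, Set.mem_inter_iff, Set.mem_preimage, Fin.forall_fin_add,
    Fin.append_left, Fin.append_right, Fin.val_castAdd, Fin.val_natAdd,
    ← Function.iterate_add_apply]
  simp only [add_comm]

lemma sum_inter_cyl (hT : Measurable T) (hmeas : ∀ k, MeasurableSet (E k))
    (hdisj : Pairwise (Function.onFun Disjoint E)) (hcover : (⋃ k, E k) = Set.univ)
    (ν : Measure X) [IsProbabilityMeasure ν] (n : ℕ) (f : X → X) (hf : Measurable f) (S : Set X)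
    (hS : MeasurableSet S) :
    ∑ α, (ν (S ∩ f ⁻¹' cyl T E n α)).toReal = (ν S).toReal := by
  rw [← ENNReal.toReal_sum (fun _ _ => measure_ne_top _ _)]
  congr 1
  rw [← tsum_fintype (L := .unconditional _), ← measure_iUnion]
  · rw [← Set.inter_iUnion, ← Set.preimage_iUnion, cyl_cover hcover]; simp
  · intro a b hab
    exact ((cyl_disj hdisj n hab).preimage f).mono Set.inter_subset_right Set.inter_subset_right
  · exact fun a => hS.inter (hf (cyl_meas hT hmeas n a))

lemma sum_cyl (hT : Measurable T) (hmeas : ∀ k, MeasurableSet (E k))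
    (hdisj : Pairwise (Function.onFun Disjoint E)) (hcover : (⋃ k, E k) = Set.univ)
    (ν : Measure X) [IsProbabilityMeasure ν] (n : ℕ) :
    ∑ α, (ν (cyl T E n α)).toReal = 1 := by
  simpa using sum_inter_cyl hT hmeas hdisj hcover ν n id measurable_id Set.univ MeasurableSet.univ

lemma refEntropy_add (hmeas : ∀ k, MeasurableSet (E k))
    (hdisj : Pairwise (Function.onFun Disjoint E)) (hcover : (⋃ k, E k) = Set.univ)
    (ν : Measure X) [IsProbabilityMeasure ν] (hν : MeasurePreserving T ν ν) (m n : ℕ) :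
    refEntropy ν T E (m + n) ≤ refEntropy ν T E m + refEntropy ν T E n := by
  have hT := hν.measurable
  have h0 : refEntropy ν T E (m + n) = ∑ a : Fin m → Fin K, ∑ b : Fin n → Fin K,
      eta (ν (cyl T E m a ∩ T^[m] ⁻¹' cyl T E n b)).toReal := by
    rw [refEntropy, ← (Fin.appendEquiv m n).sum_comp, Fintype.sum_prod_type]
    refine Finset.sum_congr rfl fun a _ => Finset.sum_congr rfl fun b _ => ?_
    rw [← cyl_append]; rfl
  rw [h0]
  refine eta_sum_le _ (fun _ _ => ENNReal.toReal_nonneg) _ _ ?_ ?_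
    (sum_cyl hT hmeas hdisj hcover ν m) (sum_cyl hT hmeas hdisj hcover ν n)
  · intro a
    exact sum_inter_cyl hT hmeas hdisj hcover ν n _ (hT.iterate m) _ (cyl_meas hT hmeas m a)
  · intro b
    have hm := hT.iterate m (cyl_meas hT hmeas n b)
    have := sum_inter_cyl hT hmeas hdisj hcover ν m id measurable_id _ hm
    rw [(hν.iterate m).measure_preimage (cyl_meas hT hmeas n b).nullMeasurableSet] at this
    rw [← this]
    simp only [Set.preimage_id, Set.inter_comm]

lemma refEntropy_mul (hmeas : ∀ k, MeasurableSet (E k))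
    (hdisj : Pairwise (Function.onFun Disjoint E)) (hcover : (⋃ k, E k) = Set.univ)
    (ν : Measure X) [IsProbabilityMeasure ν] (hν : MeasurePreserving T ν ν) (n k : ℕ) :
    refEntropy ν T E ((k + 1) * n) ≤ (k + 1) * refEntropy ν T E n := by
  induction k with
  | zero => simp
  | succ k ih =>
    have := refEntropy_add hmeas hdisj hcover ν hν ((k + 1) * n) n
    rw [show (k + 1 + 1) * n = (k + 1) * n + n by ring]
    push_cast
    linarith

lemma refEntropy_lower (hT : Measurable T) (hmeas : ∀ k, MeasurableSet (E k))
    (hdisj : Pairwise (Function.onFun Disjoint E)) (hcover : (⋃ k, E k) = Set.univ)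
    (ν : Measure X) [IsProbabilityMeasure ν] (β C : ℝ) (hC : 0 < C) (n : ℕ)
    (h : ∀ α : Fin n → Fin K, ν (cyl T E n α) ≤ ENNReal.ofReal (C * Real.exp (-β * n))) :
    β * n - Real.log C ≤ refEntropy ν T E n := by
  have : β * n - Real.log C
      = ∑ α : Fin n → Fin K, (ν (cyl T E n α)).toReal * (β * n - Real.log C) := by
    rw [← Finset.sum_mul, sum_cyl hT hmeas hdisj hcover, one_mul]
  rw [this]
  refine Finset.sum_le_sum fun α _ => ?_
  have h1 := ENNReal.toReal_le_of_le_ofReal (by positivity) (h α)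
  have h2 : 0 ≤ (ν (cyl T E n α)).toReal := ENNReal.toReal_nonneg
  generalize (ν (cyl T E n α)).toReal = p at h1 h2
  rcases h2.eq_or_lt with h0 | h0
  · simp [← h0, eta]
  · have h3 := Real.log_le_log h0 h1
    rw [Real.log_mul hC.ne' (Real.exp_pos _).ne', Real.log_exp] at h3
    unfold eta
    nlinarith

lemma refEntropy_lower' (hmeas : ∀ k, MeasurableSet (E k))
    (hdisj : Pairwise (Function.onFun Disjoint E)) (hcover : (⋃ k, E k) = Set.univ)
    (ν : Measure X) [IsProbabilityMeasure ν] (hν : MeasurePreserving T ν ν) (β : ℝ)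
    (h : ∃ C : ℝ, 0 < C ∧ ∀ n : ℕ, 1 ≤ n → ∀ α : Fin n → Fin K,
      ν (cyl T E n α) ≤ ENNReal.ofReal (C * Real.exp (-β * n))) (n : ℕ) (hn : 1 ≤ n) :
    β * n ≤ refEntropy ν T E n := by
  obtain ⟨C, hC, h⟩ := h
  by_contra! hlt
  obtain ⟨k, hk⟩ := exists_nat_gt (Real.log C / (β * n - refEntropy ν T E n))
  rw [div_lt_iff₀ (by linarith)] at hk
  have h1 := refEntropy_lower hν.measurable hmeas hdisj hcover ν β C hC ((k + 1) * n)
    (h _ (Nat.mul_pos k.succ_pos hn))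
  have h2 := refEntropy_mul hmeas hdisj hcover ν hν n k
  push_cast at h1
  nlinarith

end aux

lemma frontier_cyl_null {X : Type*} [TopologicalSpace X] [MeasurableSpace X] [BorelSpace X]
    {K : ℕ} {T : X → X} {E : Fin K → Set X} (hT : Continuous T) (ν : Measure X)
    (hν : MeasurePreserving T ν ν) (hbd : ∀ k, ν (frontier (E k)) = 0)
    (n : ℕ) (α : Fin n → Fin K) : ν (frontier (cyl T E n α)) = 0 := by
  have hsub : frontier (cyl T E n α) ⊆ ⋃ j : Fin n, T^[(j : ℕ)] ⁻¹' frontier (E (α j)) := by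
    intro x hx
    rw [cyl, frontier, interior_iInter_of_finite] at hx
    obtain ⟨h1, h2⟩ := hx
    rw [Set.mem_iInter] at h2
    push Not at h2
    obtain ⟨j, hj⟩ := h2
    refine Set.mem_iUnion.2 ⟨j, (hT.iterate j).frontier_preimage_subset _ ⟨?_, hj⟩⟩
    exact closure_mono (Set.iInter_subset _ j) h1
  refine measure_mono_null hsub (measure_iUnion_null fun j => ?_)
  rw [(hν.iterate j).measure_preimage isClosed_frontier.measurableSet.nullMeasurableSet]
  exact hbd _

/-- Entropy bound for a weak limit of measures with uniformly decaying cylinder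
measures. -/
theorem hKS_lower_bound_of_uniform_decay
    {X : Type*} [MetricSpace X] [CompactSpace X] [MeasurableSpace X] [BorelSpace X]
    (T : X → X) (hTcont : Continuous T)
    {K : ℕ} (E : Fin K → Set X)
    (hmeas : ∀ k, MeasurableSet (E k))
    (hdisj : Pairwise (Function.onFun Disjoint E))
    (hcover : (⋃ k, E k) = Set.univ)
    (μs : ℕ → ProbabilityMeasure X) (μ : ProbabilityMeasure X)
    (hinv : ∀ i, MeasurePreserving T (μs i : Measure X) (μs i : Measure X))
    (hinvμ : MeasurePreserving T (μ : Measure X) (μ : Measure X))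
    (hconv : Tendsto μs atTop (nhds μ))
    (hbd : ∀ k, (μ : Measure X) (frontier (E k)) = 0)
    (β : ℝ)
    (hdecay : ∀ i : ℕ, ∃ C : ℝ, 0 < C ∧ ∀ n : ℕ, 1 ≤ n → ∀ α : Fin n → Fin K,
      (μs i : Measure X) (cyl T E n α) ≤ ENNReal.ofReal (C * Real.exp (-β * n))) :
    hKS (μ : Measure X) T E ≥ β := by
  have : Nonempty {m : ℕ // 1 ≤ m} := ⟨⟨1, le_rfl⟩⟩
  refine le_ciInf fun n => ?_
  obtain ⟨n, hn⟩ := n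
  have hn0 : (0 : ℝ) < n := by exact_mod_cast hn
  rw [le_div_iff₀ hn0]
  have hlim : Tendsto (fun i => refEntropy (μs i : Measure X) T E n) atTop
      (nhds (refEntropy (μ : Measure X) T E n)) := by
    refine tendsto_finsetSum _ fun α _ => ?_
    have hc : Continuous eta := Real.continuous_negMulLog
    refine (hc.tendsto _).comp ((ENNReal.tendsto_toReal (measure_ne_top _ _)).comp ?_)
    exact ProbabilityMeasure.tendsto_measure_of_null_frontier_of_tendsto' hconv
      (frontier_cyl_null hTcont _ hinvμ hbd n α)
  exact ge_of_tendsto' hlim fun i =>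
    refEntropy_lower' hmeas hdisj hcover _ (hinv i) β (hdecay i) n hn
end

section
/- Simplification of the pressure term by invariance: let (X, μ) be a probability space and T : X → X a measurable map such that μ is T-invariant. Let f_1, …, f_K : X → [0,1] be measurable functions with Σ_{k=1}^K f_k(x)² = 1 for every x ∈ X, and let c : {1,…,K} × {1,…,K} → ℝ be arbitrary. For n ≥ 2 and α = (α_0,…,α_{n-1}) ∈ {1,…,K}^n set f_α = Π_{j=0}^{n-1} (f_{α_j} ∘ T^j). Then Σ_{α ∈ {1,…,K}^n} ( ∫_X f_α² dμ ) · ( Σ_{i=0}^{n-2} c(α_i, α_{i+1}) ) = (n−1) · Σ_{k,l=1}^{K} ( ∫_X f_k² · (f_l ∘ T)² dμ ) · c(k,l). -/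
open MeasureTheory Finset

/-- Refined function `f_α = Π_{j=0}^{n-1} (f_{α_j} ∘ T^j)`. -/
def fword {X : Type*} {K : ℕ} (T : X → X) (f : Fin K → X → ℝ)
    (n : ℕ) (α : Fin n → Fin K) (x : X) : ℝ :=
  ∏ j : Fin n, f (α j) (T^[(j : ℕ)] x)

lemma sum_word_pair {K n : ℕ} (w : Fin n → Fin K → ℝ) (hw : ∀ j, ∑ k, w j k = 1)
    (a b : Fin n) (hab : a ≠ b) (g : Fin K → Fin K → ℝ) :
    ∑ α : Fin n → Fin K, (∏ j, w j (α j)) * g (α a) (α b) =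
      ∑ k, ∑ l, w a k * w b l * g k l := by
  classical
  have key : ∀ k l : Fin K, ∑ α : Fin n → Fin K,
      (∏ j, w j (α j)) * ((if α a = k then 1 else 0) * (if α b = l then 1 else 0)) =
      w a k * w b l := by
    intro k l
    let v : Fin n → Fin K → ℝ := fun j s =>
      w j s * ((if j = a then (if s = k then 1 else 0) else 1) *
        (if j = b then (if s = l then 1 else 0) else 1))
    have h1 : ∏ j, ∑ s, v j s = w a k * w b l := by
      rw [Finset.prod_eq_mul a b hab]
      · simp [v, hab, hab.symm]
      · intro j _ hj
        simp [v, hj.1, hj.2, hw]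
      · simp
      · simp
    rw [← h1, Finset.prod_univ_sum, Fintype.piFinset_univ]
    refine Finset.sum_congr rfl fun α _ => ?_
    simp only [v, Finset.prod_mul_distrib, Finset.prod_ite_eq', Finset.mem_univ, if_true]
  simp_rw [← key, Finset.sum_mul]
  rw [Finset.sum_congr rfl (fun k _ => Finset.sum_comm), Finset.sum_comm]
  refine Finset.sum_congr rfl fun α _ => ?_
  simp

/-- Simplification of the pressure term by invariance; the integer `n ≥ 2` of the
informal statement is written as `n = m + 2`. -/
theorem pressure_term_simplification
    {X : Type*} [MeasurableSpace X] (μ : Measure X) [IsProbabilityMeasure μ]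
    (T : X → X) (hT : MeasurePreserving T μ μ)
    {K : ℕ} (f : Fin K → X → ℝ)
    (hfm : ∀ k, Measurable (f k))
    (hf0 : ∀ k x, 0 ≤ f k x) (hf1 : ∀ k x, f k x ≤ 1)
    (hsum : ∀ x, ∑ k, (f k x) ^ 2 = 1)
    (c : Fin K → Fin K → ℝ)
    (m : ℕ) :
    ∑ α : Fin (m + 2) → Fin K,
        (∫ x, (fword T f (m + 2) α x) ^ 2 ∂μ) *
          (∑ i : Fin (m + 1), c (α i.castSucc) (α i.succ)) =
      ((m : ℝ) + 1) *
        ∑ k : Fin K, ∑ l : Fin K,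
          (∫ x, (f k x) ^ 2 * (f l (T x)) ^ 2 ∂μ) * c k l := by
  have hTi : ∀ i : ℕ, Measurable (T^[i]) := fun i => (hT.iterate i).measurable
  have hTm := hT.measurable
  have hint1 : ∀ α : Fin (m + 2) → Fin K,
      Integrable (fun x => (fword T f (m + 2) α x) ^ 2) μ := by
    intro α
    have hm : Measurable (fun x => (fword T f (m + 2) α x) ^ 2) := by
      unfold fword
      exact (Finset.measurable_fun_prod _ fun j _ => (hfm _).comp (hTi _)).pow_const 2
    refine Integrable.of_bound hm.aestronglyMeasurable 1 (Filter.Eventually.of_forall fun x => ?_)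
    have h0 : 0 ≤ fword T f (m + 2) α x := Finset.prod_nonneg fun j _ => hf0 _ _
    have h1 : fword T f (m + 2) α x ≤ 1 :=
      Finset.prod_le_one (fun j _ => hf0 _ _) fun j _ => hf1 _ _
    rw [Real.norm_of_nonneg (by positivity)]
    exact pow_le_one₀ h0 h1
  have hm2 : ∀ k l, Measurable (fun x => (f k x) ^ 2 * (f l (T x)) ^ 2) := fun k l =>
    ((hfm k).pow_const 2).mul (((hfm l).comp hTm).pow_const 2)
  have hint2 : ∀ k l, Integrable (fun x => (f k x) ^ 2 * (f l (T x)) ^ 2) μ := by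
    intro k l
    refine Integrable.of_bound (hm2 k l).aestronglyMeasurable 1
      (Filter.Eventually.of_forall fun x => ?_)
    rw [Real.norm_of_nonneg (by positivity)]
    exact mul_le_one₀ (pow_le_one₀ (hf0 _ _) (hf1 _ _)) (by positivity)
      (pow_le_one₀ (hf0 _ _) (hf1 _ _))
  have main : ∀ i : Fin (m + 1),
      ∑ α : Fin (m + 2) → Fin K,
        (∫ x, (fword T f (m + 2) α x) ^ 2 ∂μ) * c (α i.castSucc) (α i.succ) =
      ∑ k : Fin K, ∑ l : Fin K, (∫ x, (f k x) ^ 2 * (f l (T x)) ^ 2 ∂μ) * c k l := by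
    intro i
    let G : X → ℝ := fun x => ∑ k, ∑ l, (f k x) ^ 2 * (f l (T x)) ^ 2 * c k l
    have hG : Measurable G := Finset.measurable_fun_sum _ fun k _ =>
      Finset.measurable_fun_sum _ fun l _ => (hm2 k l).mul_const _
    have e1 : ∑ k : Fin K, ∑ l : Fin K, (∫ x, (f k x) ^ 2 * (f l (T x)) ^ 2 ∂μ) * c k l
        = ∫ x, G x ∂μ := by
      simp only [G]
      rw [integral_finsetSum _ fun k _ => integrable_finsetSum _ fun l _ =>
        (hint2 k l).mul_const _]
      refine Finset.sum_congr rfl fun k _ => ?_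
      rw [integral_finsetSum _ fun l _ => (hint2 k l).mul_const _]
      simp only [integral_mul_const]
    have e2 : ∫ x, G x ∂μ = ∫ x, G (T^[(i : ℕ)] x) ∂μ := by
      conv_lhs => rw [← (hT.iterate (i : ℕ)).map_eq]
      exact integral_map (hTi _).aemeasurable hG.aestronglyMeasurable
    rw [e1, e2]
    simp only [← integral_mul_const]
    rw [← integral_finsetSum _ fun α _ => (hint1 α).mul_const _]
    congr 1
    funext x
    have h := sum_word_pair (fun (j : Fin (m + 2)) k => (f k (T^[(j : ℕ)] x)) ^ 2)
      (fun j => hsum _) i.castSucc i.succ (Fin.castSucc_lt_succ).ne c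
    simp only [Finset.prod_pow, Fin.val_castSucc, Fin.val_succ,
      Function.iterate_succ_apply'] at h
    exact h
  rw [Finset.sum_congr rfl fun α _ => Finset.mul_sum _ _ _, Finset.sum_comm,
    Finset.sum_congr rfl fun i _ => main i, Finset.sum_const, nsmul_eq_mul]
  simp
end

section
/- Time-reversal symmetry of the quantum weights for eigenvectors: let H be a complex Hilbert space, U a unitary operator on H, P_1, …, P_K self-adjoint bounded operators on H, and ψ ∈ H a vector with Uψ = λψ for some scalar λ with |λ| = 1. For n ≥ 1 and α = (α_0,…,α_{n-1}) ∈ {1,…,K}^n let P_α = P_{α_{n-1}}(n−1)⋯P_{α_1}(1)·P_{α_0} with A(t) = U^{−t}AU^{t}, and let Q_β = P̃_{β_{n-1}}(n−1)⋯P̃_{β_1}(1)·P_{β_0} be the analogous product built with U^{−1} in place of U (i.e. Ã(t) = U^{t}AU^{−t}). Then for every α, ‖P_α* ψ‖ = ‖Q_{ᾱ} ψ‖, where ᾱ = (α_{n-1},…,α_0) is the reversed word. -/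
open Finset

/-- Heisenberg evolution of an operator `A` at (nonnegative integer) time `t` under a
unitary `U`: `A(t) = U^{-t} A U^{t}`, with `U^{-1} = star U`. -/
noncomputable def heis {H : Type*} [NormedAddCommGroup H] [InnerProductSpace ℂ H]
    [CompleteSpace H] (U : H →L[ℂ] H) (A : H →L[ℂ] H) (t : ℕ) : H →L[ℂ] H :=
  ((star U) ^ t) ∘L A ∘L (U ^ t)

/-- Refined quantum partition: for a word `α = (α_0, …, α_{n-1})`,
`P_α = P_{α_{n-1}}(n-1) ⋯ P_{α_1}(1) · P_{α_0}`. -/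
noncomputable def Pword {H : Type*} [NormedAddCommGroup H] [InnerProductSpace ℂ H]
    [CompleteSpace H] {K : ℕ} (U : H →L[ℂ] H) (P : Fin K → H →L[ℂ] H) :
    (n : ℕ) → (Fin n → Fin K) → (H →L[ℂ] H)
  | 0, _ => 1
  | n + 1, α => heis U (P (α (Fin.last n))) n ∘L Pword U P n (fun j => α j.castSucc)

theorem Pword_cons_aux {H : Type*} [NormedAddCommGroup H] [InnerProductSpace ℂ H]
    [CompleteSpace H] {K : ℕ} (U V : H →L[ℂ] H) (hV : star U = V) (hUV : U * V = 1)
    (hVU : V * U = 1)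
    (P : Fin K → H →L[ℂ] H) (n : ℕ) (β : Fin (n + 1) → Fin K) :
    Pword U P (n + 1) β = V * Pword U P n (fun j => β j.succ) * U * P (β 0) := by
  induction n with
  | zero =>
    simp only [Pword, heis, pow_zero, mul_one, hVU, one_mul]
    rfl
  | succ n ih =>
    rw [Pword, ih, Pword]
    simp only [heis, ← ContinuousLinearMap.mul_def, hV, Fin.succ_last, Fin.castSucc_zero,
      Fin.succ_castSucc]
    have hc : ∀ X : H →L[ℂ] H, U * (V * X) = X := fun X => by rw [← mul_assoc, hUV, one_mul]
    rw [pow_succ' V, pow_succ U]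
    simp only [mul_assoc, hc]

theorem Pword_rev_aux {H : Type*} [NormedAddCommGroup H] [InnerProductSpace ℂ H]
    [CompleteSpace H] {K : ℕ} (U V : H →L[ℂ] H) (hV : star U = V) (hUV : U * V = 1)
    (hVU : V * U = 1)
    (P : Fin K → H →L[ℂ] H) (hsa : ∀ k, IsSelfAdjoint (P k)) (n : ℕ) (α : Fin n → Fin K) :
    Pword V P n (fun j => α j.rev) =
      V * U ^ n * (star (Pword U P n α) * (V ^ n * U)) := by
  have hV' : star V = U := by rw [← hV, star_star]
  induction n with
  | zero => simp [Pword, hVU]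
  | succ n ih =>
    have h1 := ih (fun j => α j.castSucc)
    rw [Pword_cons_aux V U hV' hVU hUV, Pword]
    simp only [Fin.rev_succ, Fin.rev_zero]
    rw [h1]
    simp only [heis, ← ContinuousLinearMap.mul_def, hV, star_mul, star_pow, hV', (hsa _).star_eq]
    have hc : ∀ X : H →L[ℂ] H, U * (V * X) = X := fun X => by rw [← mul_assoc, hUV, one_mul]
    have hd : ∀ X : H →L[ℂ] H, V * (U * X) = X := fun X => by rw [← mul_assoc, hVU, one_mul]
    have he : U ^ n * V ^ n = 1 := by
      have hcomm : Commute U V := hUV.trans hVU.symm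
      rw [← hcomm.mul_pow, hUV, one_pow]
    rw [pow_succ' U, pow_succ V]
    simp only [mul_assoc, hc, hd, he, hUV, hVU, mul_one]

/-- Time-reversal symmetry of the quantum weights for eigenvectors: the word
operators built from `U⁻¹ = star U` are denoted `Q_β = Pword (star U) P n β`, and
`ᾱ = α ∘ Fin.rev` is the reversed word. -/
theorem time_reversal_symmetry_of_weights
    {H : Type*} [NormedAddCommGroup H] [InnerProductSpace ℂ H] [CompleteSpace H]
    {K : ℕ}
    (U : H →L[ℂ] H) (hU : U ∈ unitary (H →L[ℂ] H))
    (P : Fin K → H →L[ℂ] H) (hsa : ∀ k, IsSelfAdjoint (P k))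
    (ψ : H) (lam : ℂ) (hlam : ‖lam‖ = 1) (heig : U ψ = lam • ψ)
    (n : ℕ) (hn : 1 ≤ n) (α : Fin n → Fin K) :
    ‖ContinuousLinearMap.adjoint (Pword U P n α) ψ‖ =
      ‖Pword (star U) P n (fun j => α j.rev) ψ‖ := by
  obtain ⟨hVU, hUV⟩ := Unitary.mem_iff.mp hU
  have hl : lam ≠ 0 := by
    intro h
    simp [h] at hlam
  have hVψ : (star U) ψ = lam⁻¹ • ψ := by
    have h : (star U * U) ψ = ψ := by rw [hVU]; rfl
    rw [mul_apply_eq_comp, heig, map_smul] at h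
    rw [eq_inv_smul_iff₀ hl, h]
  have hpow : ∀ m : ℕ, ((star U) ^ m) ψ = (lam⁻¹) ^ m • ψ := by
    intro m
    induction m with
    | zero => simp
    | succ m ih =>
      rw [pow_succ, mul_apply_eq_comp, hVψ, map_smul, ih, smul_smul, pow_succ']
  have hW : star U * U ^ n ∈ unitary (H →L[ℂ] H) :=
    mul_mem (Unitary.star_mem hU) (pow_mem hU n)
  rw [Pword_rev_aux U (star U) rfl hUV hVU P hsa n α, mul_apply_eq_comp,
    ContinuousLinearMap.norm_map_of_mem_unitary hW, mul_apply_eq_comp,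
    mul_apply_eq_comp, heig, map_smul, hpow, map_smul, map_smul, norm_smul,
    norm_smul, norm_pow, norm_inv, hlam, ContinuousLinearMap.star_eq_adjoint]
  simp
end
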